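/- Let $B\subset\mathbb{R}^N$ be a compact, convex, symmetric set with nonempty interior whose polar body $B^*$ is a zonoid. Then $\frac{4^N}{N!} \le \mathrm{Vol}_N(B)\,\mathrm{Vol}_N(B^*)$. -/

import Mathlib

open MeasureTheory

/-
Let `p x = ½ ∫ |⟨x, v⟩| dμ` be the support function of the zonoid `Z = B*`, so that `B` is the unit
ball of `p`. The volume product is bounded by comparing `J = ∫ exp (-p)` with the mean absolute
determinant `D = ∫ |det (v ω₁, …, v ωₙ)| dμⁿ`.

* `J = n! Vol(B)`, by slicing into balls of `p`.
* `D ≤ n! Vol(Z)`. The gradient map `x ↦ ∫ Φ(⟨x, v / ‖v‖⟩) v dμ`, with `Φ` a centred distribution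
  function with density `φ`, sends `ℝⁿ` injectively into `Z`. By Andréief's identity its Jacobian is
  `1 / n!` times the mean of `∏ φ(⟨x, v ωᵢ / ‖v ωᵢ‖⟩)` against determinants, and the change of
  variables `yᵢ = ⟨x, v ωᵢ / ‖v ωᵢ‖⟩` integrates each term over `x` to `|det (v ω₁, …, v ωₙ)|`.
* `4ⁿ n! ≤ J D`, by induction on `n`. By Prékopa-Leindler the marginal `F` of `exp (-p)` in a
  direction `u` is log-concave and even, so `F (s + t) F 0 ≤ F s F t` for `s, t > 0`, and hence
  `2 F(0) ∫ |t| F t dt ≤ (∫ F)²`. The section `F 0` is the `J` of the projection of `Z` along `u`.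
  Taking `u = v ω` and integrating over `ω`, the left side becomes a multiple of
  `∫ p exp (-p) = n J` and the right side becomes `J² D`.
-/

namespace Reisner

open Set Module
open scoped ENNReal Pointwise Matrix

theorem volume_add_volume_le_volume_add_of_isCompact {K L : Set ℝ} (hK : IsCompact K)
    (hL : IsCompact L) (hK₀ : K.Nonempty) (hL₀ : L.Nonempty) :
    volume K + volume L ≤ volume (K + L) := by
  obtain ⟨a, haK, ha⟩ := hK.exists_isGreatest hK₀
  obtain ⟨b, hbL, hb⟩ := hL.exists_isLeast hL₀
  have inter_subset : (b +ᵥ K) ∩ (a +ᵥ L) ⊆ {a + b} := by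
    rintro _ ⟨⟨x, hx, rfl⟩, y, hy, hxy⟩
    have hxa := ha hx
    have hby := hb hy
    simp only [vadd_eq_add, mem_singleton_iff] at hxy ⊢
    linarith
  have union_subset : (b +ᵥ K) ∪ (a +ᵥ L) ⊆ K + L := by
    rintro _ (⟨x, hx, rfl⟩ | ⟨y, hy, rfl⟩)
    · exact ⟨x, hx, b, hbL, add_comm _ _⟩
    · exact ⟨a, haK, y, hy, rfl⟩
  calc volume K + volume L = volume (b +ᵥ K) + volume (a +ᵥ L) := by
        rw [measure_vadd, measure_vadd]
    _ = volume ((b +ᵥ K) ∪ (a +ᵥ L)) :=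
        (measure_union₀ (hL.vadd a).measurableSet.nullMeasurableSet
          (measure_mono_null inter_subset (by simp))).symm
    _ ≤ volume (K + L) := measure_mono union_subset

theorem volume_add_volume_le_volume_add {A B : Set ℝ} (hA : MeasurableSet A)
    (hB : MeasurableSet B) (hA₀ : A.Nonempty) (hB₀ : B.Nonempty) :
    volume A + volume B ≤ volume (A + B) := by
  obtain ⟨a, ha⟩ := hA₀
  obtain ⟨b, hb⟩ := hB₀
  rw [hA.measure_eq_iSup_isCompact, hB.measure_eq_iSup_isCompact]
  simp only [iSup_and']
  refine ENNReal.biSup_add_biSup_le' ⟨∅, empty_subset _, isCompact_empty⟩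
    ⟨∅, empty_subset _, isCompact_empty⟩ fun K ⟨hKA, hK⟩ L ⟨hLB, hL⟩ => ?_
  calc volume K + volume L ≤ volume (insert a K) + volume (insert b L) := by
        gcongr <;> exact subset_insert _ _
    _ ≤ volume (insert a K + insert b L) :=
        volume_add_volume_le_volume_add_of_isCompact (hK.insert a) (hL.insert b)
          (insert_nonempty _ _) (insert_nonempty _ _)
    _ ≤ volume (A + B) := by
        gcongr <;> exact insert_subset ‹_› ‹_›

theorem rpow_mul_rpow_le_ofReal_mul_add (x y : ℝ≥0∞) {a b : ℝ} (ha : 0 < a) (hb : 0 < b)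
    (hab : a + b = 1) :
    x ^ a * y ^ b ≤ ENNReal.ofReal a * x + ENNReal.ofReal b * y := by
  have hpq : a⁻¹.HolderConjugate b⁻¹ :=
    Real.holderConjugate_iff.2 ⟨(one_lt_inv₀ ha).2 (by linarith), by simpa only [inv_inv]⟩
  simpa only [← ENNReal.rpow_mul, mul_inv_cancel₀ ha.ne', mul_inv_cancel₀ hb.ne', ENNReal.rpow_one,
    ENNReal.ofReal_inv_of_pos ha, ENNReal.ofReal_inv_of_pos hb, div_eq_mul_inv, inv_inv,
    mul_comm _ (ENNReal.ofReal _)] using ENNReal.young_inequality (x ^ a) (y ^ b) hpq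

theorem lintegral_eq_setLIntegral_Ioi_meas_lt {α : Type*} [MeasurableSpace α] (μ : Measure α)
    [SFinite μ] {f : α → ℝ≥0∞} (hf : Measurable f) :
    ∫⁻ x, f x ∂μ = ∫⁻ t in Ioi (0 : ℝ), μ {x | ENNReal.ofReal t < f x} := by
  have hvol (c : ℝ≥0∞) : c = volume ({t : ℝ | ENNReal.ofReal t < c} ∩ Ioi 0) := by
    obtain rfl | hc := eq_or_ne c ∞
    · simp
    · have : {t : ℝ | ENNReal.ofReal t < c} ∩ Ioi 0 = Ioo 0 c.toReal := by
        ext t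
        simp only [mem_inter_iff, mem_ofPred_eq, mem_Ioi, mem_Ioo]
        exact ⟨fun h => ⟨h.2, (ENNReal.ofReal_lt_iff_lt_toReal h.2.le hc).1 h.1⟩,
          fun h => ⟨(ENNReal.ofReal_lt_iff_lt_toReal h.1.le hc).2 h.2, h.1⟩⟩
      rw [this, Real.volume_Ioo, sub_zero, ENNReal.ofReal_toReal hc]
  have hmeas : MeasurableSet {p : α × ℝ | ENNReal.ofReal p.2 < f p.1} :=
    measurableSet_lt (by fun_prop) (by fun_prop)
  calc ∫⁻ x, f x ∂μ
      = ∫⁻ x, volume.restrict (Ioi 0) {t : ℝ | ENNReal.ofReal t < f x} ∂μ :=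
        lintegral_congr fun x => by
          rw [Measure.restrict_apply (measurableSet_lt (by fun_prop) (by fun_prop)), ← hvol]
    _ = μ.prod (volume.restrict (Ioi 0)) {p : α × ℝ | ENNReal.ofReal p.2 < f p.1} :=
        (Measure.prod_apply hmeas).symm
    _ = ∫⁻ t in Ioi (0 : ℝ), μ {x | ENNReal.ofReal t < f x} := Measure.prod_apply_symm hmeas

section PrekopaLeindler

variable {a b : ℝ}

theorem add_lintegral_le_of_iSup_eq_one {f g h : ℝ → ℝ≥0∞} (hf : Measurable f)
    (hg : Measurable g) (hh : Measurable h) (ha : 0 < a) (hb : 0 < b) (hab : a + b = 1)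
    (hf₁ : ⨆ x, f x = 1) (hg₁ : ⨆ x, g x = 1)
    (H : ∀ x y, f x ^ a * g y ^ b ≤ h (a * x + b * y)) :
    ENNReal.ofReal a * (∫⁻ x, f x) + ENNReal.ofReal b * (∫⁻ x, g x) ≤ ∫⁻ x, h x := by
  have superlevel_measurable {k : ℝ → ℝ≥0∞} (hk : Measurable k) (t : ℝ) :
      MeasurableSet {x | ENNReal.ofReal t < k x} := measurableSet_lt measurable_const hk
  have volume_superlevel_measurable (k : ℝ → ℝ≥0∞) :
      Measurable fun t : ℝ => volume {x | ENNReal.ofReal t < k x} :=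
    Antitone.measurable fun s t hst => measure_mono fun x hx =>
      (ENNReal.ofReal_le_ofReal hst).trans_lt hx
  have volume_smul {c : ℝ} (hc : 0 < c) (S : Set ℝ) :
      volume (c • S) = ENNReal.ofReal c * volume S := by
    rw [Measure.addHaar_smul, finrank_self, pow_one, abs_of_pos hc]
  rw [lintegral_eq_setLIntegral_Ioi_meas_lt _ hf, lintegral_eq_setLIntegral_Ioi_meas_lt _ hg,
    lintegral_eq_setLIntegral_Ioi_meas_lt _ hh,
    ← lintegral_const_mul _ (volume_superlevel_measurable f),
    ← lintegral_const_mul _ (volume_superlevel_measurable g),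
    ← lintegral_add_left ((volume_superlevel_measurable f).const_mul _)]
  refine lintegral_mono fun t => ?_
  obtain ht | ht := lt_or_ge (ENNReal.ofReal t) 1
  · have superlevel_subset : a • {x | ENNReal.ofReal t < f x} + b • {x | ENNReal.ofReal t < g x} ⊆
        {x | ENNReal.ofReal t < h x} := by
      rintro _ ⟨_, ⟨x, hx, rfl⟩, _, ⟨y, hy, rfl⟩, rfl⟩
      calc ENNReal.ofReal t = ENNReal.ofReal t ^ a * ENNReal.ofReal t ^ b := by
            rw [← ENNReal.rpow_add_of_nonneg _ _ ha.le hb.le, hab, ENNReal.rpow_one]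
        _ < f x ^ a * g y ^ b :=
            ENNReal.mul_lt_mul (ENNReal.rpow_lt_rpow hx ha) (ENNReal.rpow_lt_rpow hy hb)
        _ ≤ h (a • x + b • y) := H x y
    have hft : {x | ENNReal.ofReal t < f x}.Nonempty := lt_iSup_iff.1 (ht.trans_eq hf₁.symm)
    have hgt : {x | ENNReal.ofReal t < g x}.Nonempty := lt_iSup_iff.1 (ht.trans_eq hg₁.symm)
    rw [← volume_smul ha, ← volume_smul hb]
    exact (volume_add_volume_le_volume_add ((superlevel_measurable hf t).const_smul₀ a)
      ((superlevel_measurable hg t).const_smul₀ b) hft.smul_set hgt.smul_set).trans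
      (measure_mono superlevel_subset)
  · have superlevel_eq_empty {k : ℝ → ℝ≥0∞} (hk : ⨆ x, k x = 1) :
        {x | ENNReal.ofReal t < k x} = ∅ :=
      eq_empty_of_forall_notMem fun x hx => (hx.trans_le (le_iSup k x)).not_ge (hk ▸ ht)
    simp [superlevel_eq_empty hf₁, superlevel_eq_empty hg₁]

theorem prekopa_leindler_real_of_iSup_ne_top {f g h : ℝ → ℝ≥0∞} (hf : Measurable f)
    (hg : Measurable g) (hh : Measurable h) (ha : 0 < a) (hb : 0 < b) (hab : a + b = 1)
    (hf' : ⨆ x, f x ≠ ∞) (hg' : ⨆ x, g x ≠ ∞)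
    (H : ∀ x y, f x ^ a * g y ^ b ≤ h (a * x + b * y)) :
    (∫⁻ x, f x) ^ a * (∫⁻ x, g x) ^ b ≤ ∫⁻ x, h x := by
  set F := ⨆ x, f x with hF
  set G := ⨆ x, g x with hG
  obtain hF₀ | hF₀ := eq_or_ne F 0
  · simp [ENNReal.iSup_eq_zero.1 (hF.symm.trans hF₀), ha]
  obtain hG₀ | hG₀ := eq_or_ne G 0
  · simp [ENNReal.iSup_eq_zero.1 (hG.symm.trans hG₀), hb]
  set c := (F⁻¹) ^ a * (G⁻¹) ^ b
  have hc_ne_zero : c ≠ 0 := by simp [c, hf', hg', ha.not_gt, hb.not_gt]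
  have hc_ne_top : c ≠ ∞ :=
    ENNReal.mul_ne_top (ENNReal.rpow_ne_top_of_nonneg ha.le (ENNReal.inv_ne_top.2 hF₀))
      (ENNReal.rpow_ne_top_of_nonneg hb.le (ENNReal.inv_ne_top.2 hG₀))
  have rescale (u w : ℝ≥0∞) : (F⁻¹ * u) ^ a * (G⁻¹ * w) ^ b = c * (u ^ a * w ^ b) := by
    rw [ENNReal.mul_rpow_of_nonneg _ _ ha.le, ENNReal.mul_rpow_of_nonneg _ _ hb.le,
      mul_mul_mul_comm]
  have normalized := add_lintegral_le_of_iSup_eq_one (hf.const_mul F⁻¹) (hg.const_mul G⁻¹)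
    (hh.const_mul c) ha hb hab
    (by rw [← ENNReal.mul_iSup, ENNReal.inv_mul_cancel hF₀ hf'])
    (by rw [← ENNReal.mul_iSup, ENNReal.inv_mul_cancel hG₀ hg'])
    (fun x y => by rw [rescale]; gcongr; exact H x y)
  rw [lintegral_const_mul _ hf, lintegral_const_mul _ hg, lintegral_const_mul _ hh] at normalized
  have key := (rpow_mul_rpow_le_ofReal_mul_add _ _ ha hb hab).trans normalized
  rwa [rescale, ENNReal.mul_le_mul_iff_right hc_ne_zero hc_ne_top] at key

theorem lintegral_eq_iSup_lintegral_min_natCast {α : Type*} [MeasurableSpace α] (μ : Measure α)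
    {f : α → ℝ≥0∞} (hf : Measurable f) :
    ∫⁻ x, f x ∂μ = ⨆ n : ℕ, ∫⁻ x, min (f x) n ∂μ := by
  rw [← lintegral_iSup (fun n => hf.min measurable_const)]
  · refine lintegral_congr fun x => ?_
    rw [← inf_iSup_eq, ENNReal.iSup_natCast, inf_top_eq]
  · exact fun i j hij x => min_le_min_left _ (by exact_mod_cast hij)

theorem prekopa_leindler_real {f g h : ℝ → ℝ≥0∞} (hf : Measurable f) (hg : Measurable g)
    (hh : Measurable h) (ha : 0 < a) (hb : 0 < b) (hab : a + b = 1)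
    (H : ∀ x y, f x ^ a * g y ^ b ≤ h (a * x + b * y)) :
    (∫⁻ x, f x) ^ a * (∫⁻ x, g x) ^ b ≤ ∫⁻ x, h x := by
  have rpow_iSup (u : ℕ → ℝ≥0∞) {c : ℝ} (hc : 0 < c) : (⨆ n, u n) ^ c = ⨆ n, u n ^ c :=
    (ENNReal.orderIsoRpow c hc).map_iSup u
  have bounded (f : ℝ → ℝ≥0∞) (n : ℕ) : ⨆ x, min (f x) n ≠ ∞ :=
    ((iSup_le fun x => min_le_right _ _).trans_lt (ENNReal.natCast_lt_top n)).ne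
  rw [lintegral_eq_iSup_lintegral_min_natCast _ hf, lintegral_eq_iSup_lintegral_min_natCast _ hg,
    rpow_iSup _ ha, rpow_iSup _ hb, ENNReal.iSup_mul]
  refine iSup_le fun i => ?_
  rw [ENNReal.mul_iSup]
  refine iSup_le fun j => prekopa_leindler_real_of_iSup_ne_top (hf.min measurable_const)
    (hg.min measurable_const) hh ha hb hab (bounded f i) (bounded g j) fun x y => ?_
  calc min (f x) i ^ a * min (g y) j ^ b ≤ f x ^ a * g y ^ b := by
        gcongr <;> exact min_le_left _ _
    _ ≤ h (a * x + b * y) := H x y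

theorem measurable_finCons {α : Type*} [MeasurableSpace α] {n : ℕ} :
    Measurable fun p : α × (Fin n → α) => (Fin.cons p.1 p.2 : Fin (n + 1) → α) :=
  measurable_pi_iff.2 <| Fin.cases (by simpa only [Fin.cons_zero] using measurable_fst)
    fun j => by simpa only [Fin.cons_succ] using measurable_pi_iff.1 measurable_snd j

theorem lintegral_pi_eq_lintegral_cons {α : Type*} [MeasurableSpace α] {μ : Measure α}
    [SigmaFinite μ] {n : ℕ} {f : (Fin (n + 1) → α) → ℝ≥0∞} (hf : Measurable f) :
    ∫⁻ x, f x ∂Measure.pi (fun _ => μ) =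
      ∫⁻ t, ∫⁻ y, f (Fin.cons t y) ∂Measure.pi (fun _ => μ) ∂μ := by
  rw [((measurePreserving_piFinSuccAbove (fun _ : Fin (n + 1) => μ) 0).symm _).lintegral_map_equiv,
    lintegral_prod _ (by fun_prop)]
  simp [MeasurableEquiv.piFinSuccAbove, Fin.insertNthEquiv]

theorem lintegral_eq_lintegral_cons {n : ℕ} {f : (Fin (n + 1) → ℝ) → ℝ≥0∞} (hf : Measurable f) :
    ∫⁻ x, f x = ∫⁻ t, ∫⁻ y, f (Fin.cons t y) :=
  lintegral_pi_eq_lintegral_cons hf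

theorem measurable_lintegral_cons {n : ℕ} {f : (Fin (n + 1) → ℝ) → ℝ≥0∞} (hf : Measurable f) :
    Measurable fun t => ∫⁻ y, f (Fin.cons t y) :=
  (hf.comp measurable_finCons).lintegral_prod_right'

theorem cons_smul_add_smul {n : ℕ} (a b s t : ℝ) (x y : Fin n → ℝ) :
    (Fin.cons (a * s + b * t) (a • x + b • y) : Fin (n + 1) → ℝ) =
      a • Fin.cons s x + b • Fin.cons t y := by
  ext i
  cases i using Fin.cases <;> simp

theorem prekopa_leindler {n : ℕ} {f g h : (Fin n → ℝ) → ℝ≥0∞} (hf : Measurable f)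
    (hg : Measurable g) (hh : Measurable h) (ha : 0 < a) (hb : 0 < b) (hab : a + b = 1)
    (H : ∀ x y, f x ^ a * g y ^ b ≤ h (a • x + b • y)) :
    (∫⁻ x, f x) ^ a * (∫⁻ x, g x) ^ b ≤ ∫⁻ x, h x := by
  induction n with
  | zero =>
    simpa only [volume_pi, Measure.pi_of_empty _ (0 : Fin 0 → ℝ), lintegral_dirac, smul_zero,
      add_zero] using H 0 0
  | succ n ih =>
    have section_measurable {k : (Fin (n + 1) → ℝ) → ℝ≥0∞} (hk : Measurable k) (t : ℝ) :
        Measurable fun y => k (Fin.cons t y) :=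
      (hk.comp measurable_finCons).comp measurable_prodMk_left
    rw [lintegral_eq_lintegral_cons hf, lintegral_eq_lintegral_cons hg,
      lintegral_eq_lintegral_cons hh]
    refine prekopa_leindler_real (measurable_lintegral_cons hf) (measurable_lintegral_cons hg)
      (measurable_lintegral_cons hh) ha hb hab fun s t => ?_
    refine ih (section_measurable hf s) (section_measurable hg t) (section_measurable hh _)
      fun x y => ?_
    rw [cons_smul_add_smul]
    exact H _ _

end PrekopaLeindler

section LogConcave

/-- Log-concavity of a nonnegative function, in the multiplicative form `f x ^ a * f y ^ b ≤
f (a • x + b • y)`, which makes sense where `f` takes the values `0` or `∞`. -/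
def IsLogConcave {E : Type*} [AddCommMonoid E] [Module ℝ E] (f : E → ℝ≥0∞) : Prop :=
  ∀ ⦃x y : E⦄ ⦃a b : ℝ⦄, 0 < a → 0 < b → a + b = 1 → f x ^ a * f y ^ b ≤ f (a • x + b • y)

variable {E : Type*} [AddCommMonoid E] [Module ℝ E]

theorem isLogConcave_ofReal_exp_neg {g : E → ℝ} (hg : ConvexOn ℝ univ g) :
    IsLogConcave fun x => ENNReal.ofReal (Real.exp (-g x)) := by
  intro x y a b ha hb hab
  simp only [ENNReal.ofReal_rpow_of_pos (Real.exp_pos _), ← Real.exp_mul,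
    ← ENNReal.ofReal_mul (Real.exp_pos _).le, ← Real.exp_add]
  have := hg.2 (mem_univ x) (mem_univ y) ha.le hb.le hab
  gcongr
  simp only [smul_eq_mul] at this
  linarith

theorem IsLogConcave.mul_le_mul {f : E → ℝ≥0∞} (hf : IsLogConcave f) (x y : E) {a b : ℝ}
    (ha : 0 < a) (hb : 0 < b) (hab : a + b = 1) :
    f x * f y ≤ f (a • x + b • y) * f (b • x + a • y) := by
  have split (c : ℝ≥0∞) : c = c ^ a * c ^ b := by
    rw [← ENNReal.rpow_add_of_nonneg _ _ ha.le hb.le, hab, ENNReal.rpow_one]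
  calc f x * f y = (f x ^ a * f y ^ b) * (f x ^ b * f y ^ a) := by
        rw [mul_mul_mul_comm, ← split, mul_comm (f y ^ b), ← split]
    _ ≤ f (a • x + b • y) * f (b • x + a • y) := by
        gcongr
        · exact hf ha hb hab
        · exact hf hb ha (by rwa [add_comm])

theorem IsLogConcave.mul_apply_zero_le {f : ℝ → ℝ≥0∞} (hf : IsLogConcave f) {s t : ℝ}
    (hs : 0 < s) (ht : 0 < t) : f (s + t) * f 0 ≤ f s * f t := by
  have hst : 0 < s + t := add_pos hs ht
  have := hf.mul_le_mul (s + t) 0 (div_pos hs hst) (div_pos ht hst) (by field_simp)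
  simpa only [smul_eq_mul, mul_zero, add_zero, div_mul_cancel₀ _ hst.ne'] using this

theorem IsLogConcave.lintegral_cons {n : ℕ} {f : (Fin (n + 1) → ℝ) → ℝ≥0∞}
    (hf : IsLogConcave f) (hfm : Measurable f) :
    IsLogConcave fun t => ∫⁻ y, f (Fin.cons t y) := by
  have section_measurable (t : ℝ) : Measurable fun y => f (Fin.cons t y) :=
    (hfm.comp measurable_finCons).comp measurable_prodMk_left
  refine fun s t a b ha hb hab => prekopa_leindler (section_measurable s) (section_measurable t)
    (section_measurable _) ha hb hab fun x y => ?_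
  simp only [smul_eq_mul, cons_smul_add_smul]
  exact hf ha hb hab

theorem lintegral_setLIntegral_Ioi {α : Type*} [MeasurableSpace α] {μ : Measure α} [SFinite μ]
    {g : α → ℝ} (hg : Measurable g) {F : ℝ → ℝ≥0∞} (hF : Measurable F) :
    ∫⁻ x, (∫⁻ s in Ioi (g x), F s) ∂μ = ∫⁻ s, μ {x | g x < s} * F s := by
  have hmeas : MeasurableSet {p : α × ℝ | g p.1 < p.2} :=
    measurableSet_lt (by fun_prop) (by fun_prop)
  calc ∫⁻ x, (∫⁻ s in Ioi (g x), F s) ∂μ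
      = ∫⁻ x, (∫⁻ s, {p : α × ℝ | g p.1 < p.2}.indicator (fun p => F p.2) (x, s)) ∂μ := by
        refine lintegral_congr fun x => ?_
        rw [← lintegral_indicator measurableSet_Ioi]
        rfl
    _ = ∫⁻ s, ∫⁻ x, {p : α × ℝ | g p.1 < p.2}.indicator (fun p => F p.2) (x, s) ∂μ :=
        lintegral_lintegral_swap ((hF.comp measurable_snd).indicator hmeas).aemeasurable
    _ = ∫⁻ s, μ {x | g x < s} * F s := by
        refine lintegral_congr fun s => ?_
        rw [mul_comm, ← lintegral_indicator_const (measurableSet_lt hg measurable_const)]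
        rfl

theorem setLIntegral_Ioi_setLIntegral_Ioi_add {F : ℝ → ℝ≥0∞} (hF : Measurable F) :
    ∫⁻ s in Ioi (0 : ℝ), ∫⁻ t in Ioi (0 : ℝ), F (s + t) = ∫⁻ r, ENNReal.ofReal r * F r := by
  have shift (s : ℝ) : ∫⁻ t in Ioi (0 : ℝ), F (s + t) = ∫⁻ r in Ioi s, F r := by
    simpa using (measurePreserving_add_left volume s).setLIntegral_comp_preimage
      (measurableSet_Ioi (a := s)) hF
  have length (r : ℝ) : volume.restrict (Ioi (0 : ℝ)) {s | s < r} = ENNReal.ofReal r := by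
    rw [Iio_def, Measure.restrict_apply measurableSet_Iio, Iio_inter_Ioi, Real.volume_Ioo, sub_zero]
  simp only [shift, lintegral_setLIntegral_Ioi (g := fun s => s) measurable_id hF, length]

theorem lintegral_eq_two_mul_setLIntegral_Ioi {F : ℝ → ℝ≥0∞} (hF : F.Even) :
    ∫⁻ t, F t = 2 * ∫⁻ t in Ioi (0 : ℝ), F t := by
  have reflect : ∫⁻ t in Iic (0 : ℝ), F t = ∫⁻ t in Ioi (0 : ℝ), F t := by
    rw [← setLIntegral_congr Iio_ae_eq_Iic]
    simpa [hF _] using (Measure.measurePreserving_neg (volume : Measure ℝ)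
      ).setLIntegral_comp_preimage_emb (MeasurableEquiv.neg ℝ).measurableEmbedding F (Ioi 0)
  rw [← lintegral_add_compl F (measurableSet_Ioi (a := (0 : ℝ))), compl_Ioi, reflect, two_mul]

theorem IsLogConcave.two_mul_lintegral_abs_mul_le {F : ℝ → ℝ≥0∞} (hF : IsLogConcave F)
    (hFm : Measurable F) (hF_even : F.Even) :
    2 * ((∫⁻ t, ENNReal.ofReal |t| * F t) * F 0) ≤ (∫⁻ t, F t) ^ 2 := by
  have half : (∫⁻ r, ENNReal.ofReal r * F r) * F 0 ≤ (∫⁻ t in Ioi (0 : ℝ), F t) ^ 2 := by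
    rw [← setLIntegral_Ioi_setLIntegral_Ioi_add hFm, sq,
      ← lintegral_mul_const _ (by fun_prop), ← lintegral_mul_const _ hFm]
    refine setLIntegral_mono' measurableSet_Ioi fun s hs => ?_
    rw [← lintegral_mul_const _ (by fun_prop), ← lintegral_const_mul _ hFm]
    exact setLIntegral_mono' measurableSet_Ioi fun t ht => hF.mul_apply_zero_le hs ht
  have moment : ∫⁻ t, ENNReal.ofReal |t| * F t = 2 * ∫⁻ r, ENNReal.ofReal r * F r := by
    rw [lintegral_eq_two_mul_setLIntegral_Ioi fun t => by rw [abs_neg, hF_even t]]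
    congr 1
    rw [← lintegral_indicator measurableSet_Ioi]
    refine lintegral_congr fun t => ?_
    obtain ht | ht := lt_or_ge 0 t
    · rw [indicator_of_mem (mem_Ioi.2 ht), abs_of_pos ht]
    · rw [indicator_of_notMem (notMem_Ioi.2 ht), ENNReal.ofReal_of_nonpos ht, zero_mul]
  calc 2 * ((∫⁻ t, ENNReal.ofReal |t| * F t) * F 0)
      = 2 ^ 2 * ((∫⁻ r, ENNReal.ofReal r * F r) * F 0) := by rw [moment]; ring
    _ ≤ 2 ^ 2 * (∫⁻ t in Ioi (0 : ℝ), F t) ^ 2 := by gcongr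
    _ = (∫⁻ t, F t) ^ 2 := by
        rw [lintegral_eq_two_mul_setLIntegral_Ioi hF_even, mul_pow]

theorem IsLogConcave.two_mul_lintegral_abs_coord_mul_le {n : ℕ} {f : (Fin (n + 1) → ℝ) → ℝ≥0∞}
    (hf : IsLogConcave f) (hfm : Measurable f) (hf_even : f.Even) :
    2 * ((∫⁻ x, ENNReal.ofReal |x 0| * f x) * ∫⁻ y, f (Fin.cons 0 y)) ≤ (∫⁻ x, f x) ^ 2 := by
  have marginal_even : (fun t => ∫⁻ y, f (Fin.cons t y)).Even := by
    intro t
    dsimp only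
    rw [← lintegral_neg_eq_self]
    refine lintegral_congr fun y => ?_
    rw [← hf_even (Fin.cons t y)]
    congr 1
    ext i
    cases i using Fin.cases <;> simp
  rw [lintegral_eq_lintegral_cons hfm, lintegral_eq_lintegral_cons (by fun_prop)]
  simp only [Fin.cons_zero, lintegral_const_mul' _ _ ENNReal.ofReal_ne_top]
  exact (hf.lintegral_cons hfm).two_mul_lintegral_abs_mul_le (measurable_lintegral_cons hfm)
    marginal_even

end LogConcave

section SeminormIntegral

theorem setLIntegral_Ioi_ofReal_of_hasDerivAt {u w : ℝ → ℝ} {c : ℝ}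
    (hderiv : ∀ s ∈ Ici c, HasDerivAt u (-w s) s) (hw : ∀ s ∈ Ioi c, 0 ≤ w s)
    (hu : Filter.Tendsto u Filter.atTop (nhds 0)) :
    ∫⁻ s in Ioi c, ENNReal.ofReal (w s) = ENNReal.ofReal (u c) := by
  have hderiv' : ∀ s ∈ Ici c, HasDerivAt (fun s => -u s) (w s) s := fun s hs => by
    simpa only [neg_neg] using (hderiv s hs).fun_neg
  have hu' : Filter.Tendsto (fun s => -u s) Filter.atTop (nhds 0) := by
    simpa only [neg_zero] using hu.neg
  rw [← ofReal_integral_eq_lintegral_ofReal (integrableOn_Ioi_deriv_of_nonneg' hderiv' hw hu')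
      ((ae_restrict_mem measurableSet_Ioi).mono hw),
    integral_Ioi_of_hasDerivAt_of_nonneg' hderiv' hw hu', zero_sub, neg_neg]

theorem setLIntegral_Ioi_ofReal_exp_neg (c : ℝ) :
    ∫⁻ s in Ioi c, ENNReal.ofReal (Real.exp (-s)) = ENNReal.ofReal (Real.exp (-c)) :=
  setLIntegral_Ioi_ofReal_of_hasDerivAt (u := fun s => Real.exp (-s))
    (fun s _ => by simpa using (hasDerivAt_neg s).exp) (fun s _ => (Real.exp_pos _).le)
    Real.tendsto_exp_neg_atTop_nhds_zero

theorem setLIntegral_Ioi_ofReal_mul_exp_neg {c : ℝ} (hc : 0 ≤ c) :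
    ∫⁻ s in Ioi c, ENNReal.ofReal (s * Real.exp (-s)) =
      ENNReal.ofReal ((c + 1) * Real.exp (-c)) := by
  refine setLIntegral_Ioi_ofReal_of_hasDerivAt (u := fun s => (s + 1) * Real.exp (-s))
    (fun s _ => ?_) (fun s hs => ?_) ?_
  · exact (((hasDerivAt_id' s).add_const 1).fun_mul (hasDerivAt_neg s).exp).congr_deriv (by ring)
  · exact mul_nonneg (hc.trans hs.le) (Real.exp_pos _).le
  · simpa [add_mul] using (Real.tendsto_pow_mul_exp_neg_atTop_nhds_zero 1).add
      Real.tendsto_exp_neg_atTop_nhds_zero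

theorem setLIntegral_Ioi_ofReal_pow_mul_exp_neg (k : ℕ) :
    ∫⁻ s in Ioi (0 : ℝ), ENNReal.ofReal (s ^ k * Real.exp (-s)) = k.factorial := by
  have integrand (s : ℝ) : Real.exp (-s) * s ^ ((k + 1 : ℝ) - 1) = s ^ k * Real.exp (-s) := by
    rw [add_sub_cancel_right, Real.rpow_natCast, mul_comm]
  have gamma : ∫ s in Ioi (0 : ℝ), s ^ k * Real.exp (-s) = k.factorial := by
    rw [← Real.Gamma_nat_eq_factorial, Real.Gamma_eq_integral (by positivity)]
    simp only [integrand]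
  have convergent : IntegrableOn (fun s : ℝ => s ^ k * Real.exp (-s)) (Ioi 0) := by
    simpa only [integrand] using Real.GammaIntegral_convergent (s := k + 1) (by positivity)
  rw [← ofReal_integral_eq_lintegral_ofReal convergent
    ((ae_restrict_mem measurableSet_Ioi).mono fun s hs =>
      mul_nonneg (pow_nonneg (le_of_lt hs) k) (Real.exp_pos _).le), gamma, ENNReal.ofReal_natCast]

variable {E : Type*} [NormedAddCommGroup E] [NormedSpace ℝ E] [FiniteDimensional ℝ E]

theorem continuous_seminorm (p : Seminorm ℝ E) : Continuous p :=
  continuousOn_univ.1 (p.convexOn.continuousOn isOpen_univ)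

theorem isOpen_seminorm_ball_zero (p : Seminorm ℝ E) (r : ℝ) : IsOpen (p.ball 0 r) := by
  rw [p.ball_zero_eq]
  exact isOpen_lt (continuous_seminorm p) continuous_const

variable [MeasurableSpace E] [BorelSpace E] (μ : Measure E) [μ.IsAddHaarMeasure]
  (p : Seminorm ℝ E)

theorem measure_seminorm_ball {s : ℝ} (hs : 0 < s) :
    μ (p.ball 0 s) = ENNReal.ofReal (s ^ finrank ℝ E) * μ (p.ball 0 1) := by
  have smul_ball : s • p.ball 0 1 = p.ball 0 s := by
    rw [Seminorm.smul_ball_zero hs.ne', Real.norm_of_nonneg hs.le, mul_one]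
  rw [← smul_ball, Measure.addHaar_smul, abs_of_pos (pow_pos hs _)]

theorem lintegral_setLIntegral_Ioi_seminorm {F : ℝ → ℝ} (hF : Measurable F) :
    ∫⁻ x, (∫⁻ s in Ioi (p x), ENNReal.ofReal (F s)) ∂μ =
      (∫⁻ s in Ioi (0 : ℝ), ENNReal.ofReal (s ^ finrank ℝ E * F s)) * μ (p.ball 0 1) := by
  rw [lintegral_setLIntegral_Ioi (continuous_seminorm p).measurable (by fun_prop),
    ← lintegral_mul_const _ (by fun_prop), ← lintegral_indicator measurableSet_Ioi]
  refine lintegral_congr fun s => ?_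
  rw [← p.ball_zero_eq]
  obtain hs | hs := lt_or_ge 0 s
  · rw [indicator_of_mem (mem_Ioi.2 hs), measure_seminorm_ball μ p hs,
      ENNReal.ofReal_mul (pow_nonneg hs.le _), mul_right_comm]
  · rw [indicator_of_notMem (notMem_Ioi.2 hs), Seminorm.ball_eq_emptyset _ hs, measure_empty,
      zero_mul]

theorem lintegral_exp_neg_seminorm :
    ∫⁻ x, ENNReal.ofReal (Real.exp (-p x)) ∂μ = (finrank ℝ E).factorial * μ (p.ball 0 1) := by
  simpa only [setLIntegral_Ioi_ofReal_exp_neg, setLIntegral_Ioi_ofReal_pow_mul_exp_neg] using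
    lintegral_setLIntegral_Ioi_seminorm μ p (F := fun s => Real.exp (-s)) (by fun_prop)

theorem lintegral_add_one_mul_exp_neg_seminorm :
    ∫⁻ x, ENNReal.ofReal ((p x + 1) * Real.exp (-p x)) ∂μ =
      (finrank ℝ E + 1).factorial * μ (p.ball 0 1) := by
  simpa only [setLIntegral_Ioi_ofReal_mul_exp_neg (apply_nonneg p _), ← mul_assoc, ← pow_succ,
    setLIntegral_Ioi_ofReal_pow_mul_exp_neg] using
    lintegral_setLIntegral_Ioi_seminorm μ p (F := fun s => s * Real.exp (-s)) (by fun_prop)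

variable {p}

theorem measure_seminorm_ball_ne_top (hp : ∀ x, p x = 0 → x = 0) : μ (p.ball 0 1) ≠ ∞ := by
  rw [p.ball_zero_eq, measure_lt_one_eq_integral_div_gamma μ (map_zero p)
    (fun {x} => map_neg_eq_map p x) (map_add_le_add p) (fun {x} => hp x)
    (fun r x => (map_smul_eq_mul p r x).le) one_pos]
  exact ENNReal.ofReal_ne_top

theorem lintegral_exp_neg_seminorm_ne_top (hp : ∀ x, p x = 0 → x = 0) :
    ∫⁻ x, ENNReal.ofReal (Real.exp (-p x)) ∂μ ≠ ∞ := by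
  rw [lintegral_exp_neg_seminorm]
  exact ENNReal.mul_ne_top (ENNReal.natCast_ne_top _) (measure_seminorm_ball_ne_top μ hp)

theorem lintegral_exp_neg_seminorm_ne_zero :
    ∫⁻ x, ENNReal.ofReal (Real.exp (-p x)) ∂μ ≠ 0 := by
  rw [lintegral_exp_neg_seminorm]
  exact mul_ne_zero (Nat.cast_ne_zero.2 (Nat.factorial_ne_zero _))
    ((isOpen_seminorm_ball_zero p 1).measure_pos μ ⟨0, p.mem_ball_self one_pos⟩).ne'

theorem lintegral_seminorm_mul_exp_neg (hp : ∀ x, p x = 0 → x = 0) :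
    ∫⁻ x, ENNReal.ofReal (p x) * ENNReal.ofReal (Real.exp (-p x)) ∂μ =
      finrank ℝ E * ∫⁻ x, ENNReal.ofReal (Real.exp (-p x)) ∂μ := by
  have hpm : Measurable p := (continuous_seminorm p).measurable
  have split (x : E) : ENNReal.ofReal ((p x + 1) * Real.exp (-p x)) =
      ENNReal.ofReal (p x) * ENNReal.ofReal (Real.exp (-p x)) +
        ENNReal.ofReal (Real.exp (-p x)) := by
    rw [ENNReal.ofReal_mul (by positivity), ENNReal.ofReal_add (apply_nonneg p x) zero_le_one,
      ENNReal.ofReal_one, add_mul, one_mul]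
  have total := lintegral_add_one_mul_exp_neg_seminorm μ p
  simp only [split] at total
  rw [lintegral_add_left (by fun_prop), Nat.factorial_succ, Nat.cast_mul, mul_assoc,
    ← lintegral_exp_neg_seminorm, Nat.cast_succ, add_mul, one_mul] at total
  exact (ENNReal.add_left_inj (lintegral_exp_neg_seminorm_ne_top μ hp)).1 total

end SeminormIntegral

section ZonoidSeminorm

variable {Ω ι κ : Type*} [MeasurableSpace Ω] [Fintype ι] {μ : Measure Ω} {v : Ω → ι → ℝ}

theorem integrable_dotProduct (hv : Integrable v μ) (x : ι → ℝ) :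
    Integrable (fun ω => x ⬝ᵥ v ω) μ :=
  integrable_finsetSum _ fun i _ => (hv.eval i).const_mul _

theorem integrable_mulVec [Fintype κ] (hv : Integrable v μ) (M : Matrix κ ι ℝ) :
    Integrable (fun ω => M *ᵥ v ω) μ :=
  .of_eval fun i => integrable_dotProduct hv (M i)

/-- The support function `x ↦ ½ ∫ |⟨x, v⟩| dμ` of the zonoid generated by the vectors `v ω`, that
is, of the `μ`-average of the segments `[-v ω / 2, v ω / 2]`. The generating measure is carried by
an arbitrary parameter space `Ω` so that it can be pulled back and reweighted freely. -/
noncomputable def zonoidSeminorm (hv : Integrable v μ) : Seminorm ℝ (ι → ℝ) :=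
  Seminorm.of (fun x => 1 / 2 * ∫ ω, |x ⬝ᵥ v ω| ∂μ)
    (fun x y => by
      rw [← mul_add, ← integral_add (integrable_dotProduct hv x).abs
        (integrable_dotProduct hv y).abs]
      gcongr 1 / 2 * ?_
      refine integral_mono (integrable_dotProduct hv _).abs
        ((integrable_dotProduct hv x).abs.add (integrable_dotProduct hv y).abs) fun ω => ?_
      simpa only [add_dotProduct] using abs_add_le _ _)
    (fun r x => by
      simp only [smul_dotProduct, smul_eq_mul, abs_mul, integral_const_mul, Real.norm_eq_abs]
      ring)

/-- The zonoid generated by the vectors `v ω`, described by its support function. -/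
def zonoid (hv : Integrable v μ) : Set (ι → ℝ) :=
  {η | ∀ ξ, ξ ⬝ᵥ η ≤ zonoidSeminorm hv ξ}

/-- The mean absolute determinant `∫ |det (v ω₁, …, v ωₙ)| dμⁿ`, which is `n!` times the volume of
the zonoid generated by `v`. -/
noncomputable def lintegralAbsDet [DecidableEq ι] (μ : Measure Ω) (v : Ω → ι → ℝ) : ℝ≥0∞ :=
  ∫⁻ ω : ι → Ω, ENNReal.ofReal |(Matrix.of fun i => v (ω i)).det| ∂Measure.pi fun _ => μ

theorem zonoidSeminorm_apply (hv : Integrable v μ) (x : ι → ℝ) :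
    zonoidSeminorm hv x = 1 / 2 * ∫ ω, |x ⬝ᵥ v ω| ∂μ := rfl

theorem two_mul_ofReal_zonoidSeminorm (hv : Integrable v μ) (x : ι → ℝ) :
    2 * ENNReal.ofReal (zonoidSeminorm hv x) = ∫⁻ ω, ENNReal.ofReal |x ⬝ᵥ v ω| ∂μ := by
  rw [← ofReal_integral_eq_lintegral_ofReal (integrable_dotProduct hv x).abs
      (Filter.Eventually.of_forall fun ω => abs_nonneg _),
    ← ENNReal.ofReal_ofNat 2, ← ENNReal.ofReal_mul zero_le_two, zonoidSeminorm_apply]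
  congr 1
  ring

theorem zonoidSeminorm_vecMul [Fintype κ] (hv : Integrable v μ) (M : Matrix κ ι ℝ) (x : κ → ℝ) :
    zonoidSeminorm hv (x ᵥ* M) = zonoidSeminorm (integrable_mulVec hv M) x := by
  simp only [zonoidSeminorm_apply, Matrix.dotProduct_mulVec]

end ZonoidSeminorm

section Slicing

theorem exists_det_ne_zero_mulVec_eq_single {ι : Type*} [Fintype ι] [DecidableEq ι] {u : ι → ℝ}
    (hu : u ≠ 0) (i : ι) : ∃ M : Matrix ι ι ℝ, M.det ≠ 0 ∧ M *ᵥ u = Pi.single i 1 := by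
  obtain ⟨A, hA⟩ := SeparatingDual.exists_continuousLinearEquiv_apply_eq (R := ℝ) hu
    (Pi.single_ne_zero_iff.2 one_ne_zero : (Pi.single i 1 : ι → ℝ) ≠ 0)
  refine ⟨LinearMap.toMatrix' A.toLinearEquiv.toLinearMap, ?_, ?_⟩
  · rw [LinearMap.det_toMatrix']
    exact (LinearEquiv.isUnit_det' A.toLinearEquiv).ne_zero
  · rw [LinearMap.toMatrix'_mulVec]
    exact hA

theorem lintegral_eq_abs_det_mul_lintegral_vecMul {ι : Type*} [Fintype ι] [DecidableEq ι]
    {M : Matrix ι ι ℝ} (hM : M.det ≠ 0) {f : (ι → ℝ) → ℝ≥0∞} (hf : Measurable f) :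
    ∫⁻ x, f x = ENNReal.ofReal |M.det| * ∫⁻ x, f (x ᵥ* M) := by
  have hMt : Mᵀ.det ≠ 0 := by rwa [Matrix.det_transpose]
  have map_volume : ∫⁻ x, f (x ᵥ* M) = ∫⁻ x, f x ∂Measure.map (Matrix.toLin' Mᵀ) volume := by
    rw [lintegral_map hf (LinearMap.continuous_of_finiteDimensional _).measurable]
    simp only [Matrix.toLin'_apply, Matrix.mulVec_transpose]
  rw [map_volume, Real.map_matrix_volume_pi_eq_smul_volume_pi hMt, lintegral_smul_measure,
    smul_eq_mul, ← mul_assoc, ← ENNReal.ofReal_mul (abs_nonneg _), ← abs_mul,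
    Matrix.det_transpose, mul_inv_cancel₀ hM, abs_one, ENNReal.ofReal_one, one_mul]

theorem cons_zero_vecMul {R κ : Type*} [NonUnitalNonAssocSemiring R] {n : ℕ} (y : Fin n → R)
    (M : Matrix (Fin (n + 1)) κ R) :
    (Fin.cons 0 y : Fin (n + 1) → R) ᵥ* M = y ᵥ* M.submatrix Fin.succ id := by
  ext j
  simp [Matrix.vecMul, dotProduct, Fin.sum_univ_succ]

theorem det_mul_det_cons_of_mulVec_eq_single {R : Type*} [CommRing R] {n : ℕ}
    {M : Matrix (Fin (n + 1)) (Fin (n + 1)) R} {u : Fin (n + 1) → R}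
    (hu : M *ᵥ u = Pi.single 0 1) (A : Fin n → Fin (n + 1) → R) :
    M.det * (Matrix.of (Fin.cons u A : Fin (n + 1) → Fin (n + 1) → R)).det =
      (Matrix.of fun i => M.submatrix Fin.succ id *ᵥ A i).det := by
  have rows_mulVec : Matrix.of (Fin.cons u A : Fin (n + 1) → Fin (n + 1) → R) * Mᵀ =
      Matrix.of (Fin.cons (Pi.single 0 1) fun i => M *ᵥ A i) := by
    ext i j
    cases i using Fin.cases <;>
      simp [← hu, Matrix.mul_apply, Matrix.mulVec, dotProduct, mul_comm]
  have minor : (Matrix.of (Fin.cons (Pi.single 0 1) fun i => M *ᵥ A i :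
      Fin (n + 1) → Fin (n + 1) → R)).submatrix Fin.succ Fin.succ =
      Matrix.of fun i => M.submatrix Fin.succ id *ᵥ A i := rfl
  rw [mul_comm, ← M.det_transpose, ← Matrix.det_mul, rows_mulVec, Matrix.det_succ_row_zero,
    Fin.sum_univ_succ]
  simp [minor]

theorem measurable_det {ι : Type*} [Fintype ι] [DecidableEq ι] :
    Measurable fun A : ι → ι → ℝ => (Matrix.of A).det := by
  simp only [Matrix.det_apply, Matrix.of_apply]
  fun_prop

variable {n : ℕ}

theorem IsLogConcave.two_mul_lintegral_abs_dotProduct_mul_le {f : (Fin (n + 1) → ℝ) → ℝ≥0∞}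
    (hf : IsLogConcave f) (hfm : Measurable f) (hf_even : f.Even)
    {M : Matrix (Fin (n + 1)) (Fin (n + 1)) ℝ} (hM : M.det ≠ 0) {u : Fin (n + 1) → ℝ}
    (hu : M *ᵥ u = Pi.single 0 1) :
    2 * (∫⁻ x, ENNReal.ofReal |x ⬝ᵥ u| * f x) *
        (ENNReal.ofReal |M.det| * ∫⁻ y, f (y ᵥ* M.submatrix Fin.succ id)) ≤
      (∫⁻ x, f x) ^ 2 := by
  have vecMul_measurable : Measurable fun x : Fin (n + 1) → ℝ => x ᵥ* M :=
    (continuous_id.matrix_vecMul continuous_const).measurable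
  have dotProduct_measurable : Measurable fun x : Fin (n + 1) → ℝ => x ⬝ᵥ u :=
    (continuous_id.dotProduct continuous_const).measurable
  have g_logConcave : IsLogConcave fun x => f (x ᵥ* M) := fun x y a b ha hb hab => by
    simpa only [Matrix.add_vecMul, Matrix.smul_vecMul] using hf ha hb hab
  have g_even : (fun x => f (x ᵥ* M)).Even := fun x => by
    simpa only [Matrix.neg_vecMul] using hf_even _
  have key := g_logConcave.two_mul_lintegral_abs_coord_mul_le (hfm.comp vecMul_measurable) g_even
  simp only [cons_zero_vecMul] at key
  have coord (x : Fin (n + 1) → ℝ) : x ᵥ* M ⬝ᵥ u = x 0 := by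
    rw [← Matrix.dotProduct_mulVec, hu, dotProduct_single, mul_one]
  rw [lintegral_eq_abs_det_mul_lintegral_vecMul hM hfm,
    lintegral_eq_abs_det_mul_lintegral_vecMul hM (by fun_prop), mul_pow]
  simp only [coord]
  calc _ = ENNReal.ofReal |M.det| ^ 2 * (2 * ((∫⁻ x, ENNReal.ofReal |x 0| * f (x ᵥ* M)) *
        ∫⁻ y, f (y ᵥ* M.submatrix Fin.succ id))) := by ring
    _ ≤ _ := by gcongr

end Slicing

section MeanDeterminant

variable {Ω : Type*} [MeasurableSpace Ω] {μ : Measure Ω} {n : ℕ}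

theorem measurable_ofReal_abs_det {ι : Type*} [Fintype ι] [DecidableEq ι] {v : Ω → ι → ℝ}
    (hvm : Measurable v) :
    Measurable fun ω : ι → Ω => ENNReal.ofReal |(Matrix.of fun i => v (ω i)).det| :=
  (measurable_det.comp
    (measurable_pi_lambda _ fun i => hvm.comp (measurable_pi_apply i))).abs.ennreal_ofReal

theorem lintegralAbsDet_succ [SigmaFinite μ] {v : Ω → Fin (n + 1) → ℝ} (hvm : Measurable v) :
    lintegralAbsDet μ v = ∫⁻ t, ∫⁻ ω : Fin n → Ω, ENNReal.ofReal
      |(Matrix.of (Fin.cons (v t) (v ∘ ω) : Fin (n + 1) → Fin (n + 1) → ℝ)).det|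
      ∂Measure.pi (fun _ => μ) ∂μ := by
  have comp_cons (t : Ω) (ω : Fin n → Ω) :
      (fun i => v ((Fin.cons t ω : Fin (n + 1) → Ω) i)) = Fin.cons (v t) (v ∘ ω) :=
    Fin.comp_cons v t ω
  simp only [lintegralAbsDet, lintegral_pi_eq_lintegral_cons (measurable_ofReal_abs_det hvm),
    comp_cons]

theorem lintegralAbsDet_mulVec_submatrix_succ {v : Ω → Fin (n + 1) → ℝ}
    {M : Matrix (Fin (n + 1)) (Fin (n + 1)) ℝ} {u : Fin (n + 1) → ℝ}
    (hu : M *ᵥ u = Pi.single 0 1) :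
    lintegralAbsDet μ (fun ω => M.submatrix Fin.succ id *ᵥ v ω) =
      ENNReal.ofReal |M.det| * ∫⁻ ω : Fin n → Ω, ENNReal.ofReal
        |(Matrix.of (Fin.cons u (v ∘ ω) : Fin (n + 1) → Fin (n + 1) → ℝ)).det|
        ∂Measure.pi fun _ => μ := by
  rw [lintegralAbsDet, ← lintegral_const_mul' _ _ ENNReal.ofReal_ne_top]
  simp only [← ENNReal.ofReal_mul (abs_nonneg _), ← abs_mul,
    det_mul_det_cons_of_mulVec_eq_single hu, Function.comp_apply]

theorem eq_zero_of_zonoidSeminorm_mulVec_submatrix_succ_eq_zero {v : Ω → Fin (n + 1) → ℝ}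
    (hv : Integrable v μ) (hdef : ∀ x, zonoidSeminorm hv x = 0 → x = 0)
    {M : Matrix (Fin (n + 1)) (Fin (n + 1)) ℝ} (hM : M.det ≠ 0) (y : Fin n → ℝ)
    (hy : zonoidSeminorm (integrable_mulVec hv (M.submatrix Fin.succ id)) y = 0) : y = 0 := by
  rw [← zonoidSeminorm_vecMul hv, ← cons_zero_vecMul] at hy
  have cons_eq_zero := Matrix.eq_zero_of_vecMul_eq_zero hM (hdef _ hy)
  exact funext fun i => by simpa using congrFun cons_eq_zero i.succ

/- The vectors `v ω` are replaced by their images `w ω` in the quotient by the line of `u`, that is,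
the zonoid is projected and the seminorm restricted to `uᗮ`. -/
theorem exists_two_mul_lintegral_abs_dotProduct_mul_le {v : Ω → Fin (n + 1) → ℝ}
    (hvm : Measurable v) (hv : Integrable v μ) (hdef : ∀ x, zonoidSeminorm hv x = 0 → x = 0)
    {u : Fin (n + 1) → ℝ} (hu : u ≠ 0) :
    ∃ (w : Ω → Fin n → ℝ) (hw : Integrable w μ), Measurable w ∧
      (∀ x, zonoidSeminorm hw x = 0 → x = 0) ∧
      2 * (∫⁻ x, ENNReal.ofReal |x ⬝ᵥ u| * ENNReal.ofReal (Real.exp (-zonoidSeminorm hv x))) *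
        ((∫⁻ y, ENNReal.ofReal (Real.exp (-zonoidSeminorm hw y))) * lintegralAbsDet μ w) ≤
      (∫⁻ x, ENNReal.ofReal (Real.exp (-zonoidSeminorm hv x))) ^ 2 *
        ∫⁻ ω : Fin n → Ω, ENNReal.ofReal
          |(Matrix.of (Fin.cons u (v ∘ ω) : Fin (n + 1) → Fin (n + 1) → ℝ)).det|
          ∂Measure.pi fun _ => μ := by
  obtain ⟨M, hM, hMu⟩ := exists_det_ne_zero_mulVec_eq_single hu 0
  refine ⟨_, integrable_mulVec hv (M.submatrix Fin.succ id),
    (continuous_const.matrix_mulVec continuous_id).measurable.comp hvm,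
    eq_zero_of_zonoidSeminorm_mulVec_submatrix_succ_eq_zero hv hdef hM, ?_⟩
  have weight_measurable :
      Measurable fun x => ENNReal.ofReal (Real.exp (-zonoidSeminorm hv x)) :=
    (Real.continuous_exp.comp (continuous_seminorm _).neg).measurable.ennreal_ofReal
  have slice := (isLogConcave_ofReal_exp_neg
    (zonoidSeminorm hv).convexOn).two_mul_lintegral_abs_dotProduct_mul_le weight_measurable
      (fun x => by simp only [map_neg_eq_map]) hM hMu
  simp only [zonoidSeminorm_vecMul] at slice
  rw [lintegralAbsDet_mulVec_submatrix_succ hMu]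
  calc _ = _ := by ring
    _ ≤ _ := mul_le_mul_left slice _

theorem lintegral_lintegral_abs_dotProduct_mul [SigmaFinite μ] {ι : Type*} [Fintype ι]
    {v : Ω → ι → ℝ} (hvm : Measurable v) (hv : Integrable v μ) {f : (ι → ℝ) → ℝ≥0∞}
    (hf : Measurable f) :
    ∫⁻ ω, ∫⁻ x, ENNReal.ofReal |x ⬝ᵥ v ω| * f x ∂volume ∂μ =
      2 * ∫⁻ x, ENNReal.ofReal (zonoidSeminorm hv x) * f x := by
  have dotProduct_measurable : Measurable fun q : Ω × (ι → ℝ) => q.2 ⬝ᵥ v q.1 := by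
    unfold dotProduct
    fun_prop
  rw [lintegral_lintegral_swap
      (dotProduct_measurable.abs.ennreal_ofReal.mul (hf.comp measurable_snd)).aemeasurable,
    ← lintegral_const_mul' _ _ ENNReal.ofNat_ne_top]
  refine lintegral_congr fun x => ?_
  rw [lintegral_mul_const _ (by fun_prop), ← two_mul_ofReal_zonoidSeminorm hv, mul_assoc]

theorem four_pow_mul_factorial_le_lintegral_exp_neg_mul_lintegralAbsDet [SigmaFinite μ]
    {v : Ω → Fin n → ℝ} (hvm : Measurable v) (hv : Integrable v μ)
    (hdef : ∀ x, zonoidSeminorm hv x = 0 → x = 0) :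
    (4 ^ n * n.factorial : ℝ≥0∞) ≤
      (∫⁻ x, ENNReal.ofReal (Real.exp (-zonoidSeminorm hv x))) * lintegralAbsDet μ v := by
  induction n with
  | zero =>
    have seminorm_eq_zero (x : Fin 0 → ℝ) : zonoidSeminorm hv x = 0 := by
      rw [Subsingleton.elim x 0, map_zero]
    simp [seminorm_eq_zero, lintegralAbsDet, volume_pi, Measure.pi_of_empty _ Fin.elim0]
  | succ n ih =>
    set f := fun x => ENNReal.ofReal (Real.exp (-zonoidSeminorm hv x))
    have f_measurable : Measurable f :=
      (Real.continuous_exp.comp (continuous_seminorm _).neg).measurable.ennreal_ofReal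
    have slice (t : Ω) :
        (4 ^ n * n.factorial : ℝ≥0∞) * (2 * ∫⁻ x, ENNReal.ofReal |x ⬝ᵥ v t| * f x) ≤
        (∫⁻ x, f x) ^ 2 * ∫⁻ ω : Fin n → Ω, ENNReal.ofReal
          |(Matrix.of (Fin.cons (v t) (v ∘ ω) : Fin (n + 1) → Fin (n + 1) → ℝ)).det|
          ∂Measure.pi fun _ => μ := by
      rcases eq_or_ne (v t) 0 with ht | ht
      · simp [ht]
      · obtain ⟨w, hw, hwm, hw_def, h⟩ :=
          exists_two_mul_lintegral_abs_dotProduct_mul_le hvm hv hdef ht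
        rw [mul_comm]
        exact (mul_le_mul_right (ih hwm hw hw_def) _).trans h
    have integral_ne_zero : ∫⁻ x, f x ≠ 0 := lintegral_exp_neg_seminorm_ne_zero volume
    have integral_ne_top : ∫⁻ x, f x ≠ ∞ := lintegral_exp_neg_seminorm_ne_top volume hdef
    rw [← ENNReal.mul_le_mul_iff_right integral_ne_zero integral_ne_top]
    calc (∫⁻ x, f x) * (4 ^ (n + 1) * (n + 1).factorial)
        = 4 ^ n * n.factorial * (2 * (2 * ((n + 1 : ℕ) * ∫⁻ x, f x))) := by
          rw [Nat.factorial_succ]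
          push_cast
          ring
      _ = 4 ^ n * n.factorial *
            (2 * (2 * ∫⁻ x, ENNReal.ofReal (zonoidSeminorm hv x) * f x)) := by
          rw [lintegral_seminorm_mul_exp_neg volume hdef, finrank_fin_fun]
      _ = ∫⁻ t, 4 ^ n * n.factorial * (2 * ∫⁻ x, ENNReal.ofReal |x ⬝ᵥ v t| * f x) ∂μ := by
          rw [← lintegral_lintegral_abs_dotProduct_mul hvm hv f_measurable,
            lintegral_const_mul' _ _ (by finiteness),
            lintegral_const_mul' _ _ ENNReal.ofNat_ne_top]
      _ ≤ (∫⁻ x, f x) ^ 2 * lintegralAbsDet μ v := by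
          rw [lintegralAbsDet_succ hvm, ← lintegral_const_mul' _ _ (by finiteness)]
          exact lintegral_mono slice
      _ = (∫⁻ x, f x) * ((∫⁻ x, f x) * lintegralAbsDet μ v) := by ring

end MeanDeterminant

section Andreief

variable {Ω ι : Type*} [MeasurableSpace Ω] [Fintype ι] {μ : Measure Ω} [SigmaFinite μ]

theorem measurePreserving_comp_perm (σ : Equiv.Perm ι) :
    MeasurePreserving (MeasurableEquiv.arrowCongr' σ⁻¹ (MeasurableEquiv.refl Ω))
      (Measure.pi fun _ => μ) (Measure.pi fun _ => μ) :=
  measurePreserving_arrowCongr' (fun _ => μ) (fun _ => μ) σ⁻¹ (.refl Ω) fun _ => .id μ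

variable [DecidableEq ι] {𝕜 : Type*} [RCLike 𝕜] {f g : Ω → ι → 𝕜}

theorem sum_perm_prod_mul_det {R : Type*} [CommRing R] (A B : Matrix ι ι R) :
    ∑ σ : Equiv.Perm ι, (∏ i, A (σ i) i) * (B.submatrix σ id).det = A.det * B.det := by
  simp only [Matrix.det_permute, Matrix.det_apply' A, Finset.sum_mul]
  exact Finset.sum_congr rfl fun σ _ => by ring

theorem prod_mul_det_eq_sum {R : Type*} [CommRing R] (a : ι → R) (B : Matrix ι ι R) :
    (∏ i, a i) * B.det =
      ∑ σ : Equiv.Perm ι, ((Equiv.Perm.sign σ : ℤ) : R) * ∏ i, a i * B i (σ i) := by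
  rw [← Matrix.det_transpose, Matrix.det_apply', Finset.mul_sum]
  refine Finset.sum_congr rfl fun σ _ => ?_
  simp only [Finset.prod_mul_distrib, Matrix.transpose_apply]
  ring

theorem integrable_sign_mul_prod (h : ∀ i j, Integrable (fun ω => f ω i * g ω j) μ)
    (σ : Equiv.Perm ι) :
    Integrable (fun ω : ι → Ω =>
      ((Equiv.Perm.sign σ : ℤ) : 𝕜) * ∏ i, f (ω i) i * g (ω i) (σ i)) (Measure.pi fun _ => μ) :=
  (Integrable.fintype_prod (f := fun i ω => f ω i * g ω (σ i)) fun i => h i (σ i)).const_mul _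

theorem integrable_prod_mul_det (h : ∀ i j, Integrable (fun ω => f ω i * g ω j) μ) :
    Integrable (fun ω : ι → Ω => (∏ i, f (ω i) i) * (Matrix.of fun i => g (ω i)).det)
      (Measure.pi fun _ => μ) := by
  simp only [prod_mul_det_eq_sum, Matrix.of_apply]
  exact integrable_finsetSum _ fun σ _ => integrable_sign_mul_prod h σ

theorem integral_prod_mul_det (h : ∀ i j, Integrable (fun ω => f ω i * g ω j) μ) :
    ∫ ω : ι → Ω, (∏ i, f (ω i) i) * (Matrix.of fun i => g (ω i)).det ∂Measure.pi (fun _ => μ) =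
      (Matrix.of fun i j => ∫ ω, f ω i * g ω j ∂μ).det := by
  simp only [prod_mul_det_eq_sum, Matrix.of_apply]
  rw [integral_finsetSum _ fun σ _ => integrable_sign_mul_prod h σ, ← Matrix.det_transpose,
    Matrix.det_apply']
  refine Finset.sum_congr rfl fun σ _ => ?_
  rw [integral_const_mul, integral_fintype_prod_eq_prod (f := fun i ω => f ω i * g ω (σ i))]
  rfl

theorem integrable_prod_mul_det_submatrix (h : ∀ i j, Integrable (fun ω => f ω i * g ω j) μ)
    (σ : Equiv.Perm ι) :
    Integrable (fun ω : ι → Ω => (∏ i, (Matrix.of fun i => f (ω i)) (σ i) i) *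
      ((Matrix.of fun i => g (ω i)).submatrix σ id).det) (Measure.pi fun _ => μ) :=
  (measurePreserving_comp_perm σ).integrable_comp_of_integrable (integrable_prod_mul_det h)

theorem integral_prod_mul_det_submatrix (h : ∀ i j, Integrable (fun ω => f ω i * g ω j) μ)
    (σ : Equiv.Perm ι) :
    ∫ ω : ι → Ω, (∏ i, (Matrix.of fun i => f (ω i)) (σ i) i) *
        ((Matrix.of fun i => g (ω i)).submatrix σ id).det ∂Measure.pi (fun _ => μ) =
      (Matrix.of fun i j => ∫ ω, f ω i * g ω j ∂μ).det :=
  ((measurePreserving_comp_perm σ).integral_comp' _).trans (integral_prod_mul_det h)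

theorem integrable_det_mul_det (h : ∀ i j, Integrable (fun ω => f ω i * g ω j) μ) :
    Integrable
      (fun ω : ι → Ω => (Matrix.of fun i => f (ω i)).det * (Matrix.of fun i => g (ω i)).det)
      (Measure.pi fun _ => μ) := by
  simp only [← sum_perm_prod_mul_det]
  exact integrable_finsetSum _ fun σ _ => integrable_prod_mul_det_submatrix h σ

theorem integral_det_mul_det (h : ∀ i j, Integrable (fun ω => f ω i * g ω j) μ) :
    ∫ ω : ι → Ω, (Matrix.of fun i => f (ω i)).det * (Matrix.of fun i => g (ω i)).det
        ∂Measure.pi (fun _ => μ) =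
      (Fintype.card ι).factorial * (Matrix.of fun i j => ∫ ω, f ω i * g ω j ∂μ).det := by
  simp only [← sum_perm_prod_mul_det]
  rw [integral_finsetSum _ fun σ _ => integrable_prod_mul_det_submatrix h σ]
  simp only [integral_prod_mul_det_submatrix h, Finset.sum_const, Finset.card_univ,
    Fintype.card_perm, nsmul_eq_mul]

end Andreief

section CauchyTransport

open ProbabilityTheory NormedSpace

variable {Ω ι : Type*} [MeasurableSpace Ω] [Fintype ι] {μ : Measure Ω} {v : Ω → ι → ℝ}

/-- The cumulative distribution function of the standard Cauchy law minus `1 / 2`, which makes it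
odd. -/
noncomputable def centeredCauchyCDF (t : ℝ) : ℝ := Real.pi⁻¹ * Real.arctan t

theorem abs_centeredCauchyCDF_le (t : ℝ) : |centeredCauchyCDF t| ≤ 1 / 2 := by
  rw [centeredCauchyCDF, abs_mul, abs_of_pos (inv_pos.2 Real.pi_pos),
    inv_mul_le_iff₀ Real.pi_pos, abs_le]
  constructor <;> linarith [Real.arctan_lt_pi_div_two t, Real.neg_pi_div_two_lt_arctan t]

theorem strictMono_centeredCauchyCDF : StrictMono centeredCauchyCDF :=
  Real.arctan_strictMono.const_mul (inv_pos.2 Real.pi_pos)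

theorem measurable_centeredCauchyCDF : Measurable centeredCauchyCDF :=
  strictMono_centeredCauchyCDF.monotone.measurable

theorem hasDerivAt_centeredCauchyCDF (t : ℝ) :
    HasDerivAt centeredCauchyCDF (cauchyPDFReal 0 1 t) t := by
  have deriv_arctan : HasDerivAt centeredCauchyCDF (Real.pi⁻¹ * (1 / (1 + t ^ 2))) t :=
    (Real.hasDerivAt_arctan t).const_mul _
  simpa [cauchyPDFReal_def, add_comm] using deriv_arctan

theorem cauchyPDFReal_zero_one_le_one (t : ℝ) : cauchyPDFReal 0 1 t ≤ 1 := by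
  have inv_pi_le_one : Real.pi⁻¹ ≤ 1 := inv_le_one_of_one_le₀ (by linarith [Real.pi_gt_three])
  have inv_le_one : (t ^ 2 + 1)⁻¹ ≤ 1 := inv_le_one_of_one_le₀ (by nlinarith)
  simpa [cauchyPDFReal_def] using mul_le_one₀ inv_pi_le_one (by positivity) inv_le_one

theorem lintegral_prod_cauchyPDF :
    ∫⁻ y : ι → ℝ, ENNReal.ofReal (∏ i, cauchyPDFReal 0 1 (y i)) = 1 := by
  have prod_nonneg (y : ι → ℝ) : 0 ≤ ∏ i, cauchyPDFReal 0 1 (y i) :=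
    Finset.prod_nonneg fun i _ => (cauchyPDF_pos 0 one_ne_zero _).le
  have prod_integrable : Integrable fun y : ι → ℝ => ∏ i, cauchyPDFReal 0 1 (y i) :=
    .fintype_prod fun _ => integrable_cauchyPDFReal 0
  rw [← ofReal_integral_eq_lintegral_ofReal prod_integrable (.of_forall prod_nonneg),
    integral_fintype_prod_volume_eq_pow, integral_cauchyPDFReal_eq_one 0 one_ne_zero, one_pow,
    ENNReal.ofReal_one]

theorem abs_det_mul_lintegral_prod_cauchyPDF_dotProduct [DecidableEq ι] {U : ι → ι → ℝ}
    (hU : (Matrix.of U).det ≠ 0) :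
    ENNReal.ofReal |(Matrix.of U).det| *
      ∫⁻ x, ENNReal.ofReal (∏ i, cauchyPDFReal 0 1 (x ⬝ᵥ U i)) = 1 := by
  have measurable_prod :
      Measurable fun y : ι → ℝ => ENNReal.ofReal (∏ i, cauchyPDFReal 0 1 (y i)) :=
    (Finset.measurable_prod _ fun i _ =>
      (measurable_cauchyPDFReal 0 1).comp (measurable_pi_apply i)).ennreal_ofReal
  rw [← lintegral_prod_cauchyPDF (ι := ι), lintegral_eq_abs_det_mul_lintegral_vecMul
    (M := (Matrix.of U)ᵀ) (by rwa [Matrix.det_transpose]) measurable_prod, Matrix.det_transpose]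
  rfl

/-- The standard dot product of `ι → ℝ` as a continuous bilinear map. -/
noncomputable def dotProductCLM : (ι → ℝ) →L[ℝ] (ι → ℝ) →L[ℝ] ℝ :=
  (dotProductBilin ℝ ℝ).toContinuousBilinearMap

theorem dotProductCLM_apply (x y : ι → ℝ) : dotProductCLM x y = x ⬝ᵥ y := rfl

theorem measurable_normalize : Measurable (normalize : (ι → ℝ) → ι → ℝ) := by
  unfold NormedSpace.normalize
  fun_prop

theorem norm_normalize_le_one {E : Type*} [NormedAddCommGroup E] [NormedSpace ℝ E] (w : E) :
    ‖normalize w‖ ≤ 1 := by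
  rcases eq_or_ne w 0 with rfl | hw
  · simp
  · exact (norm_normalize_eq_one_iff.2 hw).le

theorem measurable_dotProduct_normalize (hvm : Measurable v) (x : ι → ℝ) :
    Measurable fun ω => x ⬝ᵥ normalize (v ω) :=
  (dotProductCLM x).measurable.comp (measurable_normalize.comp hvm)

/-- The map `x ↦ ∫ Φ(⟨x, v / ‖v‖⟩) v dμ`, with `Φ` the centred Cauchy distribution function; it is
the gradient of a convex function. Only the argument of `Φ` is normalized: this keeps the derivative
integrable without affecting the monotonicity in `x`. -/
noncomputable def zonoidMap (μ : Measure Ω) (v : Ω → ι → ℝ) (x : ι → ℝ) : ι → ℝ :=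
  ∫ ω, centeredCauchyCDF (x ⬝ᵥ normalize (v ω)) • v ω ∂μ

theorem integrable_centeredCauchyCDF_smul (hvm : Measurable v) (hv : Integrable v μ) (x : ι → ℝ) :
    Integrable (fun ω => centeredCauchyCDF (x ⬝ᵥ normalize (v ω)) • v ω) μ :=
  hv.bdd_smul (1 / 2)
    (measurable_centeredCauchyCDF.comp (measurable_dotProduct_normalize hvm x)).aestronglyMeasurable
    (.of_forall fun _ => abs_centeredCauchyCDF_le _)

theorem integrable_centeredCauchyCDF_mul_dotProduct (hvm : Measurable v) (hv : Integrable v μ)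
    (x ξ : ι → ℝ) :
    Integrable (fun ω => centeredCauchyCDF (x ⬝ᵥ normalize (v ω)) * (ξ ⬝ᵥ v ω)) μ := by
  simpa only [dotProduct_smul, smul_eq_mul] using
    integrable_dotProduct (integrable_centeredCauchyCDF_smul hvm hv x) ξ

theorem dotProduct_zonoidMap (hvm : Measurable v) (hv : Integrable v μ) (x ξ : ι → ℝ) :
    ξ ⬝ᵥ zonoidMap μ v x =
      ∫ ω, centeredCauchyCDF (x ⬝ᵥ normalize (v ω)) * (ξ ⬝ᵥ v ω) ∂μ := by
  rw [← dotProductCLM_apply, zonoidMap,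
    ← (dotProductCLM ξ).integral_comp_comm (integrable_centeredCauchyCDF_smul hvm hv x)]
  simp only [dotProductCLM_apply, dotProduct_smul, smul_eq_mul]

theorem zonoidMap_mem_zonoid (hvm : Measurable v) (hv : Integrable v μ) (x : ι → ℝ) :
    zonoidMap μ v x ∈ zonoid hv := fun ξ => by
  rw [dotProduct_zonoidMap hvm hv, zonoidSeminorm_apply, ← integral_const_mul]
  refine integral_mono (integrable_centeredCauchyCDF_mul_dotProduct hvm hv x ξ)
    ((integrable_dotProduct hv ξ).abs.const_mul _) fun ω => (le_abs_self _).trans ?_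
  rw [abs_mul]
  gcongr
  exact abs_centeredCauchyCDF_le _

theorem zonoidMap_injective (hvm : Measurable v) (hv : Integrable v μ)
    (hdef : ∀ x, zonoidSeminorm hv x = 0 → x = 0) : Function.Injective (zonoidMap μ v) := by
  intro x y hxy
  set φ := fun ω => (centeredCauchyCDF (x ⬝ᵥ normalize (v ω)) -
    centeredCauchyCDF (y ⬝ᵥ normalize (v ω))) * ((x - y) ⬝ᵥ v ω) with hφ
  have dotProduct_eq (ω : Ω) : (x - y) ⬝ᵥ v ω =
      ‖v ω‖ * (x ⬝ᵥ normalize (v ω) - y ⬝ᵥ normalize (v ω)) := by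
    rw [← sub_dotProduct, ← smul_eq_mul, ← dotProduct_smul, norm_smul_normalize]
  have φ_nonneg (ω : Ω) : 0 ≤ φ ω := by
    simp only [hφ, dotProduct_eq, mul_left_comm _ ‖v ω‖]
    exact mul_nonneg (norm_nonneg _)
      ((strictMono_centeredCauchyCDF.monotone.monovary monotone_id).sub_mul_sub_nonneg _ _)
  have φ_integrable : Integrable φ μ := by
    simp only [hφ, sub_mul]
    exact (integrable_centeredCauchyCDF_mul_dotProduct hvm hv x (x - y)).sub
        (integrable_centeredCauchyCDF_mul_dotProduct hvm hv y (x - y))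
  have φ_integral : ∫ ω, φ ω ∂μ = 0 := by
    simp only [hφ, sub_mul]
    rw [integral_sub (integrable_centeredCauchyCDF_mul_dotProduct hvm hv x (x - y))
      (integrable_centeredCauchyCDF_mul_dotProduct hvm hv y (x - y)),
      ← dotProduct_zonoidMap hvm hv, ← dotProduct_zonoidMap hvm hv, hxy, sub_self]
  have dotProduct_eq_zero : ∀ᵐ ω ∂μ, |(x - y) ⬝ᵥ v ω| = 0 := by
    filter_upwards [(integral_eq_zero_iff_of_nonneg φ_nonneg φ_integrable).1 φ_integral] with ω hω
    rw [abs_eq_zero]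
    refine (mul_eq_zero.1 hω).elim (fun h => ?_) id
    rw [dotProduct_eq, strictMono_centeredCauchyCDF.injective (sub_eq_zero.1 h), sub_self, mul_zero]
  refine sub_eq_zero.1 (hdef _ ?_)
  rw [zonoidSeminorm_apply, integral_eq_zero_of_ae dotProduct_eq_zero, mul_zero]

/-- The gradient of `x ↦ Φ(⟨x, w / ‖w‖⟩)` at `x`, with `Φ` the centred Cauchy distribution
function. -/
noncomputable def cauchyGradient (x w : ι → ℝ) : ι → ℝ :=
  cauchyPDFReal 0 1 (x ⬝ᵥ normalize w) • normalize w

theorem norm_cauchyGradient_le_one (x w : ι → ℝ) : ‖cauchyGradient x w‖ ≤ 1 := by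
  rw [cauchyGradient, norm_smul, Real.norm_of_nonneg (cauchyPDF_pos 0 one_ne_zero _).le]
  exact mul_le_one₀ (cauchyPDFReal_zero_one_le_one _) (norm_nonneg _) (norm_normalize_le_one w)

theorem measurable_uncurry_cauchyGradient :
    Measurable (Function.uncurry (cauchyGradient (ι := ι))) := by
  have normalize_measurable : Measurable fun p : (ι → ℝ) × (ι → ℝ) => normalize p.2 :=
    measurable_normalize.comp measurable_snd
  have dotProduct_measurable : Measurable fun p : (ι → ℝ) × (ι → ℝ) => p.1 ⬝ᵥ p.2 :=
    (continuous_fst.dotProduct continuous_snd).measurable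
  exact ((measurable_cauchyPDFReal 0 1).comp (dotProduct_measurable.comp
    (measurable_fst.prodMk normalize_measurable))).smul normalize_measurable

theorem hasFDerivAt_centeredCauchyCDF_dotProduct (x w : ι → ℝ) :
    HasFDerivAt (fun x => centeredCauchyCDF (x ⬝ᵥ normalize w))
      (dotProductCLM (cauchyGradient x w)) x := by
  have deriv_dotProduct : HasFDerivAt (fun x => normalize w ⬝ᵥ x)
      (dotProductCLM (normalize w)) x := (dotProductCLM (normalize w)).hasFDerivAt
  simp only [cauchyGradient, map_smul, dotProduct_comm _ (normalize w)]
  exact (hasDerivAt_centeredCauchyCDF _).comp_hasFDerivAt x deriv_dotProduct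

/-- The derivative of `zonoidMap μ v` at `x`. -/
noncomputable def zonoidMapDeriv (μ : Measure Ω) (v : Ω → ι → ℝ) (x : ι → ℝ) :
    (ι → ℝ) →L[ℝ] ι → ℝ :=
  ∫ ω, (dotProductCLM (cauchyGradient x (v ω))).smulRight (v ω) ∂μ

theorem norm_smulRight_cauchyGradient_le (x w : ι → ℝ) :
    ‖(dotProductCLM (cauchyGradient x w)).smulRight w‖ ≤ ‖dotProductCLM (ι := ι)‖ * ‖w‖ := by
  rw [ContinuousLinearMap.norm_smulRight_apply]
  gcongr
  exact dotProductCLM.unit_le_opNorm _ (norm_cauchyGradient_le_one x w)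

theorem integrable_smulRight_cauchyGradient (hvm : Measurable v) (hv : Integrable v μ)
    (x : ι → ℝ) :
    Integrable (fun ω => (dotProductCLM (cauchyGradient x (v ω))).smulRight (v ω)) μ := by
  refine (hv.norm.const_mul ‖dotProductCLM (ι := ι)‖).mono' ?_
    (.of_forall fun ω => norm_smulRight_cauchyGradient_le x (v ω))
  have gradient_measurable : Measurable fun ω => cauchyGradient x (v ω) :=
    measurable_uncurry_cauchyGradient.of_uncurry_left.comp hvm
  exact ((ContinuousLinearMap.smulRightL ℝ (ι → ℝ) (ι → ℝ)).comp
    dotProductCLM).aestronglyMeasurable_comp₂ gradient_measurable.aestronglyMeasurable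
      hvm.aestronglyMeasurable

theorem hasFDerivAt_zonoidMap (hvm : Measurable v) (hv : Integrable v μ) (x : ι → ℝ) :
    HasFDerivAt (zonoidMap μ v) (zonoidMapDeriv μ v x) x :=
  hasFDerivAt_integral_of_dominated_of_fderiv_le Filter.univ_mem
    (.of_forall fun y => (integrable_centeredCauchyCDF_smul hvm hv y).aestronglyMeasurable)
    (integrable_centeredCauchyCDF_smul hvm hv x)
    (integrable_smulRight_cauchyGradient hvm hv x).aestronglyMeasurable
    (.of_forall fun ω y _ => norm_smulRight_cauchyGradient_le y (v ω))
    (hv.norm.const_mul _)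
    (.of_forall fun ω y _ => (hasFDerivAt_centeredCauchyCDF_dotProduct y (v ω)).smul_const (v ω))

theorem integrable_cauchyGradient_mul (hvm : Measurable v) (hv : Integrable v μ) (x : ι → ℝ)
    (i j : ι) : Integrable (fun ω => cauchyGradient x (v ω) i * v ω j) μ :=
  (hv.eval j).bdd_mul (c := 1) ((measurable_pi_apply i).comp
    (measurable_uncurry_cauchyGradient.of_uncurry_left.comp hvm)).aestronglyMeasurable
    (.of_forall fun ω => (norm_le_pi_norm _ i).trans (norm_cauchyGradient_le_one x (v ω)))

theorem det_zonoidMapDeriv [DecidableEq ι] (hvm : Measurable v) (hv : Integrable v μ)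
    (x : ι → ℝ) :
    (zonoidMapDeriv μ v x).det =
      (Matrix.of fun i j => ∫ ω, cauchyGradient x (v ω) i * v ω j ∂μ).det := by
  rw [ContinuousLinearMap.det, ← LinearMap.det_toMatrix', ← Matrix.det_transpose]
  congr 1
  ext i j
  have smulRight_integrable := integrable_smulRight_cauchyGradient hvm hv x
  rw [Matrix.transpose_apply, LinearMap.toMatrix'_apply, ContinuousLinearMap.coe_coe,
    zonoidMapDeriv, ContinuousLinearMap.integral_apply smulRight_integrable,
    eval_integral fun k => (smulRight_integrable.apply_continuousLinearMap _).eval k]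
  simp [dotProductCLM_apply]

theorem det_normalize_mul_det_nonneg [DecidableEq ι] (A : ι → ι → ℝ) :
    0 ≤ (Matrix.of fun i => normalize (A i)).det * (Matrix.of A).det := by
  have det_normalize : (Matrix.of fun i => normalize (A i)).det =
      (∏ i, ‖A i‖⁻¹) * (Matrix.of A).det :=
    Matrix.det_mul_column (fun i => ‖A i‖⁻¹) (Matrix.of A)
  rw [det_normalize, mul_assoc]
  exact mul_nonneg (Finset.prod_nonneg fun i _ => by positivity) (mul_self_nonneg _)

theorem det_normalize_ne_zero [DecidableEq ι] {A : ι → ι → ℝ} (hA : (Matrix.of A).det ≠ 0) :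
    (Matrix.of fun i => normalize (A i)).det ≠ 0 := by
  have det_eq : (Matrix.of A).det = (∏ i, ‖A i‖) * (Matrix.of fun i => normalize (A i)).det := by
    rw [← Matrix.det_mul_column]
    congr 2 with i j
    exact (congrFun (norm_smul_normalize (A i)) j).symm
  exact right_ne_zero_of_mul (det_eq ▸ hA)

theorem det_cauchyGradient_mul_det [DecidableEq ι] (x : ι → ℝ) (A : ι → ι → ℝ) :
    (Matrix.of fun i => cauchyGradient x (A i)).det * (Matrix.of A).det =
      (∏ i, cauchyPDFReal 0 1 (x ⬝ᵥ normalize (A i))) *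
        (|(Matrix.of fun i => normalize (A i)).det| * |(Matrix.of A).det|) := by
  have det_gradient : (Matrix.of fun i => cauchyGradient x (A i)).det =
      (∏ i, cauchyPDFReal 0 1 (x ⬝ᵥ normalize (A i))) *
        (Matrix.of fun i => normalize (A i)).det :=
    Matrix.det_mul_column _ (Matrix.of fun i => normalize (A i))
  rw [det_gradient, ← abs_mul, abs_of_nonneg (det_normalize_mul_det_nonneg A), mul_assoc]

theorem lintegral_det_cauchyGradient_mul_det [DecidableEq ι] (A : ι → ι → ℝ) :
    ∫⁻ x, ENNReal.ofReal ((Matrix.of fun i => cauchyGradient x (A i)).det * (Matrix.of A).det) =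
      ENNReal.ofReal |(Matrix.of A).det| := by
  rcases eq_or_ne (Matrix.of A).det 0 with hA | hA
  · simp [hA]
  · simp only [det_cauchyGradient_mul_det,
      ENNReal.ofReal_mul' (mul_nonneg (abs_nonneg _) (abs_nonneg _)),
      ENNReal.ofReal_mul (abs_nonneg _)]
    rw [lintegral_mul_const' _ _ (by finiteness), ← mul_assoc,
      mul_comm (lintegral _ _), abs_det_mul_lintegral_prod_cauchyPDF_dotProduct
        (det_normalize_ne_zero hA), one_mul]

theorem det_cauchyGradient_mul_det_nonneg [DecidableEq ι] (x : ι → ℝ) (A : ι → ι → ℝ) :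
    0 ≤ (Matrix.of fun i => cauchyGradient x (A i)).det * (Matrix.of A).det := by
  rw [det_cauchyGradient_mul_det]
  exact mul_nonneg (Finset.prod_nonneg fun i _ => (cauchyPDF_pos 0 one_ne_zero _).le)
    (by positivity)

theorem lintegral_pi_det_cauchyGradient_mul_det_le [DecidableEq ι] [SigmaFinite μ]
    (hvm : Measurable v) (hv : Integrable v μ) (x : ι → ℝ) :
    ∫⁻ ω : ι → Ω, ENNReal.ofReal ((Matrix.of fun i => cauchyGradient x (v (ω i))).det *
        (Matrix.of fun i => v (ω i)).det) ∂Measure.pi (fun _ => μ) ≤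
      (Fintype.card ι).factorial * ENNReal.ofReal |(zonoidMapDeriv μ v x).det| := by
  have entry_integrable := integrable_cauchyGradient_mul hvm hv x
  rw [← ofReal_integral_eq_lintegral_ofReal (integrable_det_mul_det entry_integrable)
      (.of_forall fun ω => det_cauchyGradient_mul_det_nonneg x fun i => v (ω i)),
    integral_det_mul_det entry_integrable, ← det_zonoidMapDeriv hvm hv,
    ENNReal.ofReal_mul (Nat.cast_nonneg _), ENNReal.ofReal_natCast]
  gcongr
  exact le_abs_self _

theorem measurable_det_cauchyGradient_mul_det [DecidableEq ι] (hvm : Measurable v) :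
    Measurable fun p : (ι → Ω) × (ι → ℝ) =>
      ENNReal.ofReal ((Matrix.of fun i => cauchyGradient p.2 (v (p.1 i))).det *
        (Matrix.of fun i => v (p.1 i)).det) := by
  have v_measurable (i : ι) : Measurable fun p : (ι → Ω) × (ι → ℝ) => v (p.1 i) :=
    hvm.comp ((measurable_pi_apply i).comp measurable_fst)
  exact ((measurable_det.comp (measurable_pi_lambda _ fun i =>
    measurable_uncurry_cauchyGradient.comp (measurable_snd.prodMk (v_measurable i)))).mul
      (measurable_det.comp (measurable_pi_lambda _ v_measurable))).ennreal_ofReal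

theorem lintegralAbsDet_le_factorial_mul_volume_zonoid [DecidableEq ι] [SigmaFinite μ]
    (hvm : Measurable v) (hv : Integrable v μ) (hdef : ∀ x, zonoidSeminorm hv x = 0 → x = 0) :
    lintegralAbsDet μ v ≤ (Fintype.card ι).factorial * volume (zonoid hv) := by
  calc lintegralAbsDet μ v
      = ∫⁻ ω : ι → Ω, ∫⁻ x, ENNReal.ofReal ((Matrix.of fun i => cauchyGradient x (v (ω i))).det *
          (Matrix.of fun i => v (ω i)).det) ∂volume ∂Measure.pi (fun _ => μ) := by
        simp only [lintegral_det_cauchyGradient_mul_det, lintegralAbsDet]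
    _ = ∫⁻ x, ∫⁻ ω : ι → Ω, ENNReal.ofReal ((Matrix.of fun i => cauchyGradient x (v (ω i))).det *
          (Matrix.of fun i => v (ω i)).det) ∂Measure.pi (fun _ => μ) :=
        lintegral_lintegral_swap (measurable_det_cauchyGradient_mul_det hvm).aemeasurable
    _ ≤ ∫⁻ x, (Fintype.card ι).factorial * ENNReal.ofReal |(zonoidMapDeriv μ v x).det| :=
        lintegral_mono (lintegral_pi_det_cauchyGradient_mul_det_le hvm hv)
    _ = (Fintype.card ι).factorial * ∫⁻ x, ENNReal.ofReal |(zonoidMapDeriv μ v x).det| :=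
        lintegral_const_mul' _ _ (ENNReal.natCast_ne_top _)
    _ ≤ (Fintype.card ι).factorial * volume (zonoidMap μ v '' univ) := by
        gcongr
        rw [← setLIntegral_univ]
        exact lintegral_abs_det_fderiv_le_addHaar_image volume .univ
          (fun x _ => (hasFDerivAt_zonoidMap hvm hv x).hasFDerivWithinAt)
          (zonoidMap_injective hvm hv hdef).injOn
    _ ≤ (Fintype.card ι).factorial * volume (zonoid hv) := by
        gcongr
        exact image_subset_iff.2 fun x _ => zonoidMap_mem_zonoid hvm hv x

end CauchyTransport

section VolumeProduct

variable {Ω : Type*} [MeasurableSpace Ω] {μ : Measure Ω} [SigmaFinite μ] {n : ℕ}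
  {v : Ω → Fin n → ℝ}

theorem four_pow_le_factorial_mul_volume_ball_mul_volume_zonoid (hvm : Measurable v)
    (hv : Integrable v μ) (hdef : ∀ x, zonoidSeminorm hv x = 0 → x = 0) :
    (4 ^ n : ℝ≥0∞) ≤
      n.factorial * (volume ((zonoidSeminorm hv).ball 0 1) * volume (zonoid hv)) := by
  have factorial_ne_zero : (n.factorial : ℝ≥0∞) ≠ 0 := Nat.cast_ne_zero.2 n.factorial_ne_zero
  rw [← ENNReal.mul_le_mul_iff_left factorial_ne_zero (ENNReal.natCast_ne_top _)]
  calc (4 ^ n * n.factorial : ℝ≥0∞)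
      ≤ (∫⁻ x, ENNReal.ofReal (Real.exp (-zonoidSeminorm hv x))) * lintegralAbsDet μ v :=
        four_pow_mul_factorial_le_lintegral_exp_neg_mul_lintegralAbsDet hvm hv hdef
    _ ≤ (n.factorial * volume ((zonoidSeminorm hv).ball 0 1)) *
          (n.factorial * volume (zonoid hv)) := by
        rw [lintegral_exp_neg_seminorm, finrank_fin_fun]
        gcongr
        simpa only [Fintype.card_fin] using
          lintegralAbsDet_le_factorial_mul_volume_zonoid hvm hv hdef
    _ = n.factorial * (volume ((zonoidSeminorm hv).ball 0 1) * volume (zonoid hv)) *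
          n.factorial := by ring

end VolumeProduct

section Polar

open scoped Topology

variable {ι : Type*} [Fintype ι] {B : Set (ι → ℝ)}

/-- The polar body `B* = {η | ⟨ξ, η⟩ ≤ 1 for all ξ ∈ B}`. In contrast with `LinearMap.polar`, the
inequality is one-sided. -/
def polarBody (B : Set (ι → ℝ)) : Set (ι → ℝ) := {η | ∀ ξ ∈ B, ξ ⬝ᵥ η ≤ 1}

theorem bddAbove_dotProduct_image_polarBody (hB : B ∈ 𝓝 0) (ξ : ι → ℝ) :
    BddAbove ((ξ ⬝ᵥ ·) '' polarBody B) := by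
  obtain ⟨r, hr, b, hb, rfl⟩ := (absorbent_nhds_zero hB : Absorbent ℝ B).gauge_set_nonempty (x := ξ)
  refine ⟨r, ?_⟩
  rintro _ ⟨η, hη, rfl⟩
  simpa only [smul_dotProduct, smul_eq_mul, mul_one] using
    mul_le_mul_of_nonneg_left (hη b hb) hr.le

theorem dotProduct_le_sSup_polarBody (hB : B ∈ 𝓝 0) (ξ : ι → ℝ) {η : ι → ℝ}
    (hη : η ∈ polarBody B) : ξ ⬝ᵥ η ≤ sSup ((ξ ⬝ᵥ ·) '' polarBody B) :=
  le_csSup (bddAbove_dotProduct_image_polarBody hB ξ) (mem_image_of_mem _ hη)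

theorem sSup_polarBody_le_one {ξ : ι → ℝ} (hξ : ξ ∈ B) :
    sSup ((ξ ⬝ᵥ ·) '' polarBody B) ≤ 1 :=
  Real.sSup_le (forall_mem_image.2 fun _ hη => hη ξ hξ) zero_le_one

theorem exists_pos_smul_mem_polarBody (hB : Bornology.IsBounded B) (η : ι → ℝ) :
    ∃ r : ℝ, 0 < r ∧ r • η ∈ polarBody B := by
  obtain ⟨R, hR, hBR⟩ := ((dotProductCLM η).lipschitz.isBounded_image hB).exists_pos_norm_le
  refine ⟨R⁻¹, inv_pos.2 hR, fun ξ hξ => ?_⟩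
  rw [dotProduct_smul, smul_eq_mul, inv_mul_le_iff₀ hR, mul_one, dotProduct_comm]
  exact (le_abs_self _).trans (hBR _ (mem_image_of_mem _ hξ))

theorem eq_zero_of_sSup_polarBody_eq_zero (hB : Bornology.IsBounded B) (hB₀ : B ∈ 𝓝 0) {x : ι → ℝ}
    (hx : sSup ((x ⬝ᵥ ·) '' polarBody B) = 0) : x = 0 := by
  obtain ⟨r, hr, hrx⟩ := exists_pos_smul_mem_polarBody hB x
  have smul_self_nonpos : r * (x ⬝ᵥ x) ≤ 0 := by
    simpa only [dotProduct_smul, smul_eq_mul, hx] using dotProduct_le_sSup_polarBody hB₀ x hrx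
  exact dotProduct_self_eq_zero.1 (le_antisymm (nonpos_of_mul_nonpos_right smul_self_nonpos hr)
    (Finset.sum_nonneg fun i _ => mul_self_nonneg _))

theorem mem_closure_of_sSup_polarBody_le_one (hB : Convex ℝ B) (hB₀ : B ∈ 𝓝 0) {x : ι → ℝ}
    (hx : sSup ((x ⬝ᵥ ·) '' polarBody B) ≤ 1) : x ∈ closure B := by
  classical
  by_contra hxB
  obtain ⟨f, c, hfB, hfx⟩ := geometric_hahn_banach_closed_point hB.closure isClosed_closure hxB
  have hc : 0 < c := by simpa using hfB 0 (subset_closure (mem_of_mem_nhds hB₀))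
  set η := (dotProductEquiv ℝ ι).symm f
  have dotProduct_η (ξ : ι → ℝ) : ξ ⬝ᵥ η = f ξ := by
    rw [dotProduct_comm]
    exact LinearMap.congr_fun ((dotProductEquiv ℝ ι).apply_symm_apply f) ξ
  have η_mem : c⁻¹ • η ∈ polarBody B := fun ξ hξ => by
    rw [dotProduct_smul, dotProduct_η, smul_eq_mul, inv_mul_le_iff₀ hc, mul_one]
    exact (hfB ξ (subset_closure hξ)).le
  have f_le : c⁻¹ * f x ≤ 1 := by
    simpa only [dotProduct_smul, smul_eq_mul, dotProduct_η] using
      (dotProduct_le_sSup_polarBody hB₀ x η_mem).trans hx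
  rw [inv_mul_le_iff₀ hc, mul_one] at f_le
  exact hfx.not_ge f_le

theorem seminorm_ball_subset_of_sSup_polarBody_eq (hB : Convex ℝ B) (hB₀ : B ∈ 𝓝 0)
    {p : Seminorm ℝ (ι → ℝ)} (hp : ∀ ξ, sSup ((ξ ⬝ᵥ ·) '' polarBody B) = p ξ) :
    p.ball 0 1 ⊆ B := by
  have ball_subset_closure : p.ball 0 1 ⊆ closure B := fun x hx =>
    mem_closure_of_sSup_polarBody_le_one hB hB₀ ((hp x).trans_le (p.mem_ball_zero.1 hx).le)
  calc p.ball 0 1 ⊆ interior (closure B) :=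
        (isOpen_seminorm_ball_zero p 1).subset_interior_iff.2 ball_subset_closure
    _ = interior B := hB.interior_closure_eq_interior_of_nonempty_interior
        ⟨0, mem_interior_iff_mem_nhds.2 hB₀⟩
    _ ⊆ B := interior_subset

theorem mem_nhds_zero_of_convex_of_eq_neg {E : Type*} [AddCommGroup E] [Module ℝ E]
    [TopologicalSpace E] [IsTopologicalAddGroup E] [ContinuousConstSMul ℝ E] {B : Set E}
    (hB : Convex ℝ B) (hsymm : B = -B) (hint : (interior B).Nonempty) : B ∈ 𝓝 0 := by
  obtain ⟨x, hx⟩ := hint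
  have neg_mem : -x ∈ interior B := by
    rw [hsymm] at hx
    exact ((Homeomorph.neg E).preimage_interior B).symm.subset hx
  rw [← mem_interior_iff_mem_nhds]
  simpa using hB.interior.midpoint_mem hx neg_mem

theorem integrable_id_of_sum_sq_eq_one {ρ : Measure (ι → ℝ)} [IsFiniteMeasure ρ]
    (hρ : ∀ᵐ η ∂ρ, ∑ i, η i ^ 2 = 1) : Integrable id ρ := by
  refine .of_bound aestronglyMeasurable_id 1 (hρ.mono fun η hη => ?_)
  refine (pi_norm_le_iff_of_nonneg zero_le_one).2 fun i => (sq_le_one_iff_abs_le_one _).1 ?_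
  rw [← hη]
  exact Finset.single_le_sum (f := fun i => η i ^ 2) (fun i _ => sq_nonneg _) (Finset.mem_univ i)

end Polar

end Reisner

open Reisner in
theorem stmt10_general {Ω : Type*} [MeasurableSpace Ω] {μ : Measure Ω} [SigmaFinite μ] {n : ℕ}
    {B : Set (Fin n → ℝ)} (hB : Bornology.IsBounded B) (hBconv : Convex ℝ B) (hB₀ : B ∈ nhds 0)
    {v : Ω → Fin n → ℝ} (hvm : Measurable v) (hv : Integrable v μ)
    (hsupp : ∀ ξ, sSup ((ξ ⬝ᵥ ·) '' polarBody B) = 1 / 2 * ∫ ω, |ξ ⬝ᵥ v ω| ∂μ) :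
    ENNReal.ofReal (4 ^ n / n.factorial) ≤ volume B * volume (polarBody B) := by
  have hdef (x : Fin n → ℝ) (hx : zonoidSeminorm hv x = 0) : x = 0 :=
    eq_zero_of_sSup_polarBody_eq_zero hB hB₀ ((hsupp x).trans hx)
  have ball_subset : (zonoidSeminorm hv).ball 0 1 ⊆ B :=
    seminorm_ball_subset_of_sSup_polarBody_eq hBconv hB₀ hsupp
  have zonoid_subset : zonoid hv ⊆ polarBody B := fun η hη ξ hξ =>
    (hη ξ).trans ((hsupp ξ).symm.trans_le (sSup_polarBody_le_one hξ))
  rw [ENNReal.ofReal_div_of_pos (by positivity), ENNReal.ofReal_natCast,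
    ENNReal.ofReal_pow zero_le_four, ENNReal.ofReal_ofNat]
  refine ENNReal.div_le_of_le_mul' ?_
  calc (4 ^ n : ENNReal)
      ≤ n.factorial * (volume ((zonoidSeminorm hv).ball 0 1) * volume (zonoid hv)) :=
        four_pow_le_factorial_mul_volume_ball_mul_volume_zonoid hvm hv hdef
    _ ≤ n.factorial * (volume B * volume (polarBody B)) := by gcongr

/-- Reisner's theorem: if `B ⊂ ℝ^N` is a compact convex symmetric body whose
polar body `B*` is a zonoid, then `4^N / N! ≤ Vol(B) Vol(B*)`. -/
theorem stmt10 (N : ℕ) (B : Set (Fin N → ℝ))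
    (hBcpt : IsCompact B) (hBconv : Convex ℝ B) (hBsym : B = -B)
    (hBint : (interior B).Nonempty)
    (Bstar : Set (Fin N → ℝ))
    (hBstar : Bstar = {η | ∀ ξ ∈ B, (∑ i, ξ i * η i) ≤ 1})
    -- `B*` is a zonoid: its support function is `ξ ↦ ½ ∫_{Σ_{N-1}} |⟨ξ,η⟩| dρ(η)`
    -- for some finite even Borel measure `ρ` on the unit sphere.
    (hzon : ∃ ρ : Measure (Fin N → ℝ), IsFiniteMeasure ρ ∧
      ρ.map (fun η => -η) = ρ ∧
      ρ {η : Fin N → ℝ | (∑ i, (η i) ^ 2) ≠ 1} = 0 ∧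
      ∀ ξ : Fin N → ℝ,
        sSup ((fun η => ∑ i, ξ i * η i) '' Bstar) =
          (1 / 2) * ∫ η, |∑ i, ξ i * η i| ∂ρ) :
    ENNReal.ofReal (4 ^ N / (N.factorial : ℝ)) ≤ volume B * volume Bstar := by
  obtain ⟨ρ, _, -, hρ, hsupp⟩ := hzon
  subst hBstar
  exact stmt10_general hBcpt.isBounded hBconv
    (Reisner.mem_nhds_zero_of_convex_of_eq_neg hBconv hBsym hBint) measurable_id
    (Reisner.integrable_id_of_sum_sq_eq_one (ae_iff.2 hρ)) hsupp
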